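/- arXiv:2406.17506 — 3 statements merged into one kernel-verified Lean document; each statement's English description precedes it below -/
import Mathlib

section
/- Let L > 0 and let f : E → ℝ be a differentiable function on a real inner product space E such that f is convex and x ↦ (L/2)‖x‖² − f(x) is convex (i.e. f ∈ F_{0,L}), and assume f_* := inf_x f(x) > −∞. Fix an integer N ≥ 1 and a stepsize γ > 0 with γL ∈ (0,2) and γL ≠ 1, and let x_{i+1} = x_i − γ∇f(x_i) for i = 0,…,N−1. Then (1/(2L))·‖∇f(x_N)‖² ≤ (f(x_0) − f_*) / ( 1 + γL · min{ 2N , (−1 + (1−γL)^{−2N})/(γL) } ). -/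
/-!
Rescale so that `L = 1` and write `Q i j ≥ 0` for the slack of the interpolation inequality between
iterates `i` and `j`, and `u n` for `(-1 + (1 - γ) ^ (-2n)) / γ`. For `1 < γ < 2`, a combination of
`Q n (n + 1)` and `Q (n + 1) n` shows that twice the decrease of the value pays for the increase of
`γ * u n * ‖∇f(x n)‖²` and for a multiple of the residual `‖(γ - 1) • ∇f(x n) + ∇f(x (n + 1))‖²`.
The accumulated coefficient of the residual is `(2n - u n) / γ`: as long as it is nonnegative the
residual is transported from one step to the next by the slacks between iterates two apart, which
gives the linear rate; once it turns negative it stays so, cocoercivity absorbs the residual, and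
the sublinear rate `2n` holds and propagates. For `γ ≤ 3 / 2` a single step already decreases the
value by `γ * ‖∇f(x (n + 1))‖²`, and for `γ ≥ 2` the gradient norm grows by
a factor of at most `γ - 1` per step.
-/

open scoped InnerProductSpace

section FirstOrder

theorem add_fderiv_apply_le_of_convexOn {E : Type*} [NormedAddCommGroup E] [NormedSpace ℝ E]
    {s : Set E} {f : E → ℝ} {f' : E →L[ℝ] ℝ} {y z : E} (hf : ConvexOn ℝ s f)
    (hf' : HasFDerivAt f f' z) (hz : z ∈ s) (hy : y ∈ s) : f z + f' (y - z) ≤ f y := by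
  have hline := hf.comp_affineMap (AffineMap.lineMap (k := ℝ) z y)
  have hderiv : HasDerivAt (f ∘ AffineMap.lineMap (k := ℝ) z y) (f' (y - z)) 0 := by
    rw [← AffineMap.lineMap_apply_zero (k := ℝ) z y] at hf'
    simpa using hf'.comp_hasDerivAt (0 : ℝ) AffineMap.hasDerivAt_lineMap
  have hslope := hline.le_slope_of_hasDerivAt (x := 0) (y := 1) (by simpa) (by simpa) one_pos hderiv
  simp only [slope_def_field, Function.comp_apply, AffineMap.lineMap_apply_one,
    AffineMap.lineMap_apply_zero, sub_zero, div_one] at hslope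
  linarith

variable {E : Type*} [NormedAddCommGroup E] [InnerProductSpace ℝ E] {L m : ℝ} {f : E → ℝ}

theorem le_add_fderiv_apply_add_norm_sq {f' : E →L[ℝ] ℝ} {z : E}
    (hsmooth : ConvexOn ℝ Set.univ (fun z => L / 2 * ‖z‖ ^ 2 - f z)) (hf' : HasFDerivAt f f' z)
    (y : E) : f y ≤ f z + f' (y - z) + L / 2 * ‖y - z‖ ^ 2 := by
  have hquad := (((hasFDerivAt_id z).norm_sq).const_mul (L / 2)).sub hf'
  have h := add_fderiv_apply_le_of_convexOn hsmooth hquad (Set.mem_univ z) (Set.mem_univ y)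
  have hinner : ⟪z, y - z⟫_ℝ = ⟪y, z⟫_ℝ - ‖z‖ ^ 2 := by
    rw [inner_sub_right, real_inner_comm, real_inner_self_eq_norm_sq]
  simp only [sub_apply, smul_apply, id_eq, ContinuousLinearMap.comp_apply,
    ContinuousLinearMap.id_apply, innerSL_apply_apply, hinner, smul_eq_mul, nsmul_eq_mul,
    Nat.cast_ofNat] at h
  rw [norm_sub_sq_real]
  linarith

-- Gradients `v` are expressed by `HasFDerivAt f (innerSL ℝ v)`, because `HasGradientAt` is only
-- available in complete spaces.
theorem add_norm_sq_gradient_le_of_forall_le (hL : 0 < L)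
    (hsmooth : ConvexOn ℝ Set.univ (fun z => L / 2 * ‖z‖ ^ 2 - f z)) {v y : E}
    (hv : HasFDerivAt f (innerSL ℝ v) y) (hm : ∀ z, m ≤ f z) :
    m + 1 / (2 * L) * ‖v‖ ^ 2 ≤ f y :=
  calc m + 1 / (2 * L) * ‖v‖ ^ 2
    _ ≤ f (y - (1 / L) • v) + 1 / (2 * L) * ‖v‖ ^ 2 := by gcongr; exact hm _
    _ ≤ f y + ⟪v, -((1 / L) • v)⟫_ℝ + L / 2 * ‖(1 / L) • v‖ ^ 2 + 1 / (2 * L) * ‖v‖ ^ 2 := by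
      have h := le_add_fderiv_apply_add_norm_sq hsmooth hv (y - (1 / L) • v)
      rw [sub_sub_cancel_left, innerSL_apply_apply, norm_neg] at h
      gcongr
    _ = f y := by
      rw [inner_neg_right, real_inner_smul_right, real_inner_self_eq_norm_sq, norm_smul, mul_pow,
        Real.norm_eq_abs, sq_abs]
      field_simp
      ring

/-- Tilting `f` by its tangent at `z` makes `z` a minimizer, so the bound for functions that are
bounded below applies. -/
theorem add_inner_add_norm_sq_sub_le (hL : 0 < L) (hcvx : ConvexOn ℝ Set.univ f)
    (hsmooth : ConvexOn ℝ Set.univ (fun z => L / 2 * ‖z‖ ^ 2 - f z)) {v w y z : E}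
    (hv : HasFDerivAt f (innerSL ℝ v) y) (hw : HasFDerivAt f (innerSL ℝ w) z) :
    f z + ⟪w, y - z⟫_ℝ + 1 / (2 * L) * ‖v - w‖ ^ 2 ≤ f y := by
  have htilt_smooth :
      ConvexOn ℝ Set.univ (fun p => L / 2 * ‖p‖ ^ 2 - (f p - innerSL ℝ w p)) := by
    refine (hsmooth.add ((innerSL ℝ w).toLinearMap.convexOn convex_univ)).congr fun p _ => ?_
    simp only [Pi.add_apply, ContinuousLinearMap.coe_coe]
    ring
  have htilt_deriv : HasFDerivAt (fun p => f p - innerSL ℝ w p) (innerSL ℝ (v - w)) y := by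
    rw [map_sub]
    exact hv.sub (innerSL ℝ w).hasFDerivAt
  have htilt_min (p : E) : f z - innerSL ℝ w z ≤ f p - innerSL ℝ w p := by
    have h := add_fderiv_apply_le_of_convexOn hcvx hw (Set.mem_univ z) (Set.mem_univ p)
    rw [map_sub] at h
    linarith
  have h := add_norm_sq_gradient_le_of_forall_le hL htilt_smooth htilt_deriv htilt_min
  simp only [innerSL_apply_apply] at h
  rw [inner_sub_right]
  linarith

end FirstOrder

section Rates

/-- The factor `(-1 + (1 - γ) ^ (-2n)) / γ` governing the linear rate, for the normalized stepsize
`γ` (that is, `γL`). Only meaningful for `γ ≠ 0` and `γ ≠ 1`. -/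
noncomputable def linearRate (γ : ℝ) (n : ℕ) : ℝ :=
  (-1 + (1 - γ) ^ (-(2 * (n : ℤ)))) / γ

/-- The normalized amount `(2n - linearRate γ n) / γ` by which the sublinear rate exceeds the linear
one. -/
noncomputable def rateGap (γ : ℝ) (n : ℕ) : ℝ :=
  (2 * n - linearRate γ n) / γ

variable {γ : ℝ}

theorem linearRate_zero (γ : ℝ) : linearRate γ 0 = 0 := by simp [linearRate]

theorem one_add_mul_linearRate (hγ : γ ≠ 0) (n : ℕ) :
    1 + γ * linearRate γ n = (((γ - 1) ^ 2) ^ n)⁻¹ := by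
  rw [linearRate, mul_div_cancel₀ _ hγ, add_neg_cancel_left, zpow_neg, zpow_mul, zpow_natCast,
    ← neg_sub γ 1]
  norm_cast
  rw [neg_sq]

theorem sq_mul_linearRate_succ (hγ : γ ≠ 0) (hγ1 : γ ≠ 1) (n : ℕ) :
    (γ - 1) ^ 2 * linearRate γ (n + 1) = linearRate γ n + (2 - γ) := by
  have hsq : (γ - 1) ^ 2 ≠ 0 := pow_ne_zero 2 (sub_ne_zero.mpr hγ1)
  have hpow : (γ - 1) ^ 2 * (1 + γ * linearRate γ (n + 1)) = 1 + γ * linearRate γ n := by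
    rw [one_add_mul_linearRate hγ, one_add_mul_linearRate hγ,
      pow_succ' ((γ - 1) ^ 2), mul_inv, mul_inv_cancel_left₀ hsq]
  apply mul_left_cancel₀ hγ
  linear_combination hpow

theorem mul_two_sub_le_linearRate (hγ1 : 1 < γ) (hγ2 : γ < 2) (n : ℕ) :
    n * (2 - γ) ≤ linearRate γ n := by
  induction n with
  | zero => simp [linearRate_zero]
  | succ n ih =>
    have hsucc := sq_mul_linearRate_succ (by linarith) hγ1.ne' n
    have hsq : (γ - 1) ^ 2 ≤ 1 := by nlinarith
    have hn : 0 ≤ n * (2 - γ) := mul_nonneg n.cast_nonneg (by linarith)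
    have hpos : 0 < linearRate γ (n + 1) := by
      refine pos_of_mul_pos_right ?_ (sq_nonneg (γ - 1))
      linarith
    push_cast
    linarith [mul_le_of_le_one_left hpos.le hsq]

theorem linearRate_nonneg (hγ1 : 1 < γ) (hγ2 : γ < 2) (n : ℕ) : 0 ≤ linearRate γ n :=
  (mul_nonneg n.cast_nonneg (by linarith)).trans (mul_two_sub_le_linearRate hγ1 hγ2 n)

theorem linearRate_le_succ (hγ1 : 1 < γ) (hγ2 : γ < 2) (n : ℕ) :
    linearRate γ n ≤ linearRate γ (n + 1) := by
  have hsq : (γ - 1) ^ 2 ≤ 1 := by nlinarith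
  linarith [sq_mul_linearRate_succ (by linarith) hγ1.ne' n,
    mul_le_of_le_one_left (linearRate_nonneg hγ1 hγ2 (n + 1)) hsq]

theorem rateGap_zero (γ : ℝ) : rateGap γ 0 = 0 := by simp [rateGap, linearRate_zero]

theorem mul_rateGap (hγ : γ ≠ 0) (n : ℕ) : γ * rateGap γ n = 2 * n - linearRate γ n :=
  mul_div_cancel₀ _ hγ

theorem rateGap_succ (hγ : γ ≠ 0) (hγ1 : γ ≠ 1) (n : ℕ) :
    rateGap γ (n + 1) = rateGap γ n + (1 - (2 - γ) * linearRate γ (n + 1)) := by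
  apply mul_left_cancel₀ hγ
  rw [mul_add, mul_rateGap hγ, mul_rateGap hγ]
  push_cast
  linear_combination -sq_mul_linearRate_succ hγ hγ1 n

theorem rateGap_le (hγ1 : 1 < γ) (hγ2 : γ < 2) (n : ℕ) : rateGap γ n ≤ n := by
  rw [rateGap, div_le_iff₀ (by linarith)]
  linarith [mul_two_sub_le_linearRate hγ1 hγ2 n]

theorem mul_rateGap_le (hγ : 3 / 2 ≤ γ) (hγ2 : γ < 2) (n : ℕ) :
    (2 - γ) * rateGap γ n ≤ 2 + 2 * (γ - 1) * linearRate γ n :=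
  have hγ1 : 1 < γ := by linarith
  calc (2 - γ) * rateGap γ n
    _ ≤ (2 - γ) * n := mul_le_mul_of_nonneg_left (rateGap_le hγ1 hγ2 n) (by linarith)
    _ ≤ linearRate γ n := by linarith [mul_two_sub_le_linearRate hγ1 hγ2 n]
    _ ≤ 2 * (γ - 1) * linearRate γ n :=
      le_mul_of_one_le_left (linearRate_nonneg hγ1 hγ2 n) (by linarith)
    _ ≤ 2 + 2 * (γ - 1) * linearRate γ n := by linarith

theorem one_lt_mul_linearRate_of_rateGap_neg (hγ1 : 1 < γ) (hγ2 : γ < 2) {n : ℕ}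
    (hn : rateGap γ n < 0) : 1 < (2 - γ) * linearRate γ n := by
  induction n with
  | zero => exact absurd (rateGap_zero γ) hn.ne
  | succ n ih =>
    rcases lt_or_ge (rateGap γ n) 0 with hneg | hnonneg
    · exact (ih hneg).trans_le
        (mul_le_mul_of_nonneg_left (linearRate_le_succ hγ1 hγ2 n) (by linarith))
    · linarith [rateGap_succ (by linarith) hγ1.ne' n]

theorem rateGap_succ_neg (hγ1 : 1 < γ) (hγ2 : γ < 2) {n : ℕ} (hn : rateGap γ n < 0) :
    rateGap γ (n + 1) < 0 := by
  have hlt := one_lt_mul_linearRate_of_rateGap_neg hγ1 hγ2 hn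
  have hle := mul_le_mul_of_nonneg_left (linearRate_le_succ hγ1 hγ2 n) (sub_nonneg.mpr hγ2.le)
  linarith [rateGap_succ (by linarith) hγ1.ne' n]

theorem two_mul_sub_three_le_of_rateGap_neg (hγ1 : 1 < γ) (hγ2 : γ < 2) {n : ℕ}
    (hn : rateGap γ n < 0) : 2 * γ - 3 ≤ 2 * n * (2 - γ) := by
  have hlt := one_lt_mul_linearRate_of_rateGap_neg hγ1 hγ2 hn
  by_contra! hlarge
  have hbernoulli : 2 - γ ≤ ((γ - 1) ^ 2) ^ n := by
    have h := one_add_mul_le_pow (a := γ - 2) (by linarith) (2 * n)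
    rw [pow_mul, show 1 + (γ - 2) = γ - 1 by ring] at h
    push_cast at h
    linarith
  have hle : (2 - γ) * (1 + γ * linearRate γ n) ≤ 1 := by
    rw [one_add_mul_linearRate (by linarith)]
    exact mul_inv_le_one_of_le₀ hbernoulli (by positivity)
  nlinarith

end Rates

section Trajectory

variable {E : Type*} [NormedAddCommGroup E] [InnerProductSpace ℝ E]

/-- The values `φ`, gradients `G` and iterates `x` of gradient descent with stepsize `γ` on a convex
function with `1`-Lipschitz gradient. The function itself is only remembered through the
interpolation inequalities between the iterates. -/
structure IsDescentTrajectory (γ : ℝ) (φ : ℕ → ℝ) (G x : ℕ → E) : Prop where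
  step : ∀ i, x (i + 1) = x i - γ • G i
  interpolation : ∀ i j, φ j + ⟪G j, x i - x j⟫_ℝ + 1 / 2 * ‖G i - G j‖ ^ 2 ≤ φ i

/-- The slack in the interpolation inequality between the iterates `i` and `j`. -/
noncomputable def interpolationGap (φ : ℕ → ℝ) (G x : ℕ → E) (i j : ℕ) : ℝ :=
  φ i - φ j - ⟪G j, x i - x j⟫_ℝ - 1 / 2 * ‖G i - G j‖ ^ 2

/-- The quantity bounded by `2 * (φ 0 - φ (n + 1))` in the long-step regime `0 ≤ rateGap γ n`. -/
noncomputable def longStepPotential (γ : ℝ) (φ : ℕ → ℝ) (G x : ℕ → E) (n : ℕ) : ℝ :=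
  γ * linearRate γ (n + 1) * ‖G (n + 1)‖ ^ 2
    + rateGap γ (n + 1) * ‖(γ - 1) • G n + G (n + 1)‖ ^ 2
    + 2 * interpolationGap φ G x n (n + 1)
    + 2 * (γ - 1) * linearRate γ (n + 1)
      * (interpolationGap φ G x n (n + 1) + interpolationGap φ G x (n + 1) n)

theorem norm_sq_smul_add (c : ℝ) (p q : E) :
    ‖c • p + q‖ ^ 2 = c ^ 2 * ‖p‖ ^ 2 + 2 * c * ⟪p, q⟫_ℝ + ‖q‖ ^ 2 := by
  rw [norm_add_sq_real, norm_smul, real_inner_smul_left, mul_pow, Real.norm_eq_abs, sq_abs]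
  ring

namespace IsDescentTrajectory

variable {γ m : ℝ} {φ : ℕ → ℝ} {G x : ℕ → E}

theorem gap_nonneg (h : IsDescentTrajectory γ φ G x) (i j : ℕ) :
    0 ≤ interpolationGap φ G x i j := by
  unfold interpolationGap
  linarith [h.interpolation i j]

theorem gap_succ_right (h : IsDescentTrajectory γ φ G x) (i : ℕ) :
    interpolationGap φ G x i (i + 1) = φ i - φ (i + 1) - γ * ⟪G i, G (i + 1)⟫_ℝ
      - 1 / 2 * (‖G i‖ ^ 2 - 2 * ⟪G i, G (i + 1)⟫_ℝ + ‖G (i + 1)‖ ^ 2) := by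
  rw [interpolationGap, h.step, sub_sub_cancel, real_inner_smul_right, norm_sub_sq_real,
    real_inner_comm (G i) (G (i + 1))]

theorem gap_succ_left (h : IsDescentTrajectory γ φ G x) (i : ℕ) :
    interpolationGap φ G x (i + 1) i = φ (i + 1) - φ i + γ * ‖G i‖ ^ 2
      - 1 / 2 * (‖G i‖ ^ 2 - 2 * ⟪G i, G (i + 1)⟫_ℝ + ‖G (i + 1)‖ ^ 2) := by
  rw [interpolationGap, h.step, sub_sub_cancel_left, inner_neg_right, real_inner_smul_right,
    norm_sub_sq_real, real_inner_comm (G i) (G (i + 1)), real_inner_self_eq_norm_sq]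
  ring

theorem sub_add_two (h : IsDescentTrajectory γ φ G x) (i : ℕ) :
    x i - x (i + 2) = γ • (G i + G (i + 1)) := by
  rw [h.step (i + 1), h.step i]
  module

theorem gap_add_two_right (h : IsDescentTrajectory γ φ G x) (i : ℕ) :
    interpolationGap φ G x i (i + 2) = φ i - φ (i + 2)
      - γ * (⟪G i, G (i + 2)⟫_ℝ + ⟪G (i + 1), G (i + 2)⟫_ℝ)
      - 1 / 2 * (‖G i‖ ^ 2 - 2 * ⟪G i, G (i + 2)⟫_ℝ + ‖G (i + 2)‖ ^ 2) := by
  rw [interpolationGap, h.sub_add_two, real_inner_smul_right, inner_add_right, norm_sub_sq_real,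
    real_inner_comm (G i) (G (i + 2)), real_inner_comm (G (i + 1)) (G (i + 2))]

theorem gap_add_two_left (h : IsDescentTrajectory γ φ G x) (i : ℕ) :
    interpolationGap φ G x (i + 2) i = φ (i + 2) - φ i
      + γ * (‖G i‖ ^ 2 + ⟪G i, G (i + 1)⟫_ℝ)
      - 1 / 2 * (‖G i‖ ^ 2 - 2 * ⟪G i, G (i + 2)⟫_ℝ + ‖G (i + 2)‖ ^ 2) := by
  rw [interpolationGap, ← neg_sub (x i), h.sub_add_two, inner_neg_right, real_inner_smul_right,
    inner_add_right, norm_sub_sq_real, real_inner_comm (G i) (G (i + 2)),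
    real_inner_self_eq_norm_sq]
  ring

theorem gap_add_gap (h : IsDescentTrajectory γ φ G x) (n : ℕ) :
    2 * (γ - 1) * (interpolationGap φ G x n (n + 1) + interpolationGap φ G x (n + 1) n)
      = (2 - γ) * ‖(γ - 1) • G n + G (n + 1)‖ ^ 2
        + γ * ((γ - 1) ^ 2 * ‖G n‖ ^ 2 - ‖G (n + 1)‖ ^ 2) := by
  rw [h.gap_succ_right, h.gap_succ_left, norm_sq_smul_add]
  ring

theorem norm_sq_succ_le (h : IsDescentTrajectory γ φ G x) (hγ : 0 < γ) (hγ2 : γ ≤ 2) (n : ℕ) :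
    ‖G (n + 1)‖ ^ 2 ≤ ‖G n‖ ^ 2 := by
  have hid : γ * (‖G n‖ ^ 2 - ‖G (n + 1)‖ ^ 2)
      = 2 * (interpolationGap φ G x n (n + 1) + interpolationGap φ G x (n + 1) n)
        + (2 - γ) * ‖G n - G (n + 1)‖ ^ 2 := by
    rw [h.gap_succ_right, h.gap_succ_left, norm_sub_sq_real]
    ring
  have hgap₁ := h.gap_nonneg n (n + 1)
  have hgap₂ := h.gap_nonneg (n + 1) n
  have := sub_nonneg.mpr hγ2
  exact sub_nonneg.mp (nonneg_of_mul_nonneg_right (hid ▸ by positivity) hγ)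

theorem norm_sq_succ_le_sq_mul (h : IsDescentTrajectory γ φ G x) (hγ2 : 2 ≤ γ) (n : ℕ) :
    ‖G (n + 1)‖ ^ 2 ≤ (γ - 1) ^ 2 * ‖G n‖ ^ 2 := by
  have hgap := h.gap_add_gap n
  have hgap_nonneg : 0 ≤ 2 * (γ - 1)
      * (interpolationGap φ G x n (n + 1) + interpolationGap φ G x (n + 1) n) :=
    mul_nonneg (by linarith) (add_nonneg (h.gap_nonneg _ _) (h.gap_nonneg _ _))
  have hres : 0 ≤ (γ - 2) * ‖(γ - 1) • G n + G (n + 1)‖ ^ 2 :=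
    mul_nonneg (by linarith) (sq_nonneg _)
  exact sub_nonneg.mp (nonneg_of_mul_nonneg_right (by linarith) (by linarith : 0 < γ))

theorem mul_norm_sq_succ_le_sub (h : IsDescentTrajectory γ φ G x) (hγ : γ ≤ 3 / 2) (n : ℕ) :
    γ * ‖G (n + 1)‖ ^ 2 ≤ φ n - φ (n + 1) := by
  have hid : φ n - φ (n + 1) - γ * ‖G (n + 1)‖ ^ 2
      = 2 * interpolationGap φ G x n (n + 1) + interpolationGap φ G x (n + 1) n
        + (3 / 2 - γ) * ‖G n - G (n + 1)‖ ^ 2 := by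
    rw [h.gap_succ_right, h.gap_succ_left, norm_sub_sq_real]
    ring
  have hgap₁ := h.gap_nonneg n (n + 1)
  have hgap₂ := h.gap_nonneg (n + 1) n
  have := sub_nonneg.mpr hγ
  exact sub_nonneg.mp (hid ▸ by positivity)

theorem sublinear_rate_of_le_three_halves (h : IsDescentTrajectory γ φ G x) (hγ : 0 < γ)
    (hγ2 : γ ≤ 3 / 2) (n : ℕ) : γ * n * ‖G n‖ ^ 2 ≤ φ 0 - φ n := by
  induction n with
  | zero => simp
  | succ n ih =>
    have hmono := mul_le_mul_of_nonneg_left (h.norm_sq_succ_le hγ (by linarith) n)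
      (by positivity : 0 ≤ γ * n)
    push_cast
    linarith [h.mul_norm_sq_succ_le_sub hγ2 n]

theorem one_step_identity (h : IsDescentTrajectory γ φ G x) {u u' : ℝ}
    (hu : (γ - 1) ^ 2 * u' = u + (2 - γ)) (n : ℕ) :
    γ * u * ‖G n‖ ^ 2 + 2 * (φ n - φ (n + 1))
      = γ * u' * ‖G (n + 1)‖ ^ 2 + (1 - (2 - γ) * u') * ‖(γ - 1) • G n + G (n + 1)‖ ^ 2
        + 2 * interpolationGap φ G x n (n + 1)
        + 2 * (γ - 1) * u'
          * (interpolationGap φ G x n (n + 1) + interpolationGap φ G x (n + 1) n) := by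
  obtain rfl : u = (γ - 1) ^ 2 * u' - (2 - γ) := by linarith
  rw [h.gap_succ_right, h.gap_succ_left, norm_sq_smul_add]
  ring

theorem two_step_identity (h : IsDescentTrajectory γ φ G x) (n : ℕ) :
    ‖(γ - 1) • G n + G (n + 1)‖ ^ 2 + (2 - γ) * interpolationGap φ G x n (n + 1)
      = ‖(γ - 1) • G (n + 1) + G (n + 2)‖ ^ 2
        + (2 - γ) * interpolationGap φ G x (n + 2) (n + 1)
        + interpolationGap φ G x n (n + 2) + (γ - 1) * interpolationGap φ G x (n + 2) n := by
  rw [h.gap_succ_right, h.gap_succ_left (n + 1), h.gap_add_two_right, h.gap_add_two_left,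
    norm_sq_smul_add, norm_sq_smul_add]
  ring

theorem longStepPotential_zero (h : IsDescentTrajectory γ φ G x) (hγ : γ ≠ 0) (hγ1 : γ ≠ 1) :
    longStepPotential γ φ G x 0 = 2 * (φ 0 - φ 1) := by
  have hid := h.one_step_identity (sq_mul_linearRate_succ hγ hγ1 0) 0
  have hgap := rateGap_succ hγ hγ1 0
  rw [rateGap_zero, zero_add (1 - _)] at hgap
  rw [linearRate_zero, mul_zero, zero_mul, zero_add, ← hgap] at hid
  exact hid.symm

theorem longStepPotential_succ_le (h : IsDescentTrajectory γ φ G x) (hγ : 3 / 2 ≤ γ) (hγ2 : γ < 2)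
    (n : ℕ) (hn : 0 ≤ rateGap γ (n + 1)) :
    longStepPotential γ φ G x (n + 1)
      ≤ longStepPotential γ φ G x n + 2 * (φ (n + 1) - φ (n + 2)) := by
  have hγ0 : 0 < γ := by linarith
  have hγ1 : 1 < γ := by linarith
  have : 0 < γ - 1 := by linarith
  have : 0 < 2 - γ := by linarith
  have hu := linearRate_nonneg hγ1 hγ2 (n + 1)
  have hcoef := sub_nonneg.mpr (mul_rateGap_le hγ hγ2 (n + 1))
  have hid : longStepPotential γ φ G x n + 2 * (φ (n + 1) - φ (n + 2))
        - longStepPotential γ φ G x (n + 1)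
      = (2 + 2 * (γ - 1) * linearRate γ (n + 1) - (2 - γ) * rateGap γ (n + 1))
          * interpolationGap φ G x n (n + 1)
        + 2 * (γ - 1) * linearRate γ (n + 1) * interpolationGap φ G x (n + 1) n
        + rateGap γ (n + 1) * ((2 - γ) * interpolationGap φ G x (n + 2) (n + 1)
          + interpolationGap φ G x n (n + 2) + (γ - 1) * interpolationGap φ G x (n + 2) n) := by
    unfold longStepPotential
    rw [rateGap_succ hγ0.ne' hγ1.ne' (n + 1)]
    linear_combination h.one_step_identity (sq_mul_linearRate_succ hγ0.ne' hγ1.ne' (n + 1)) (n + 1)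
      + rateGap γ (n + 1) * h.two_step_identity n
  have hgap₁ := h.gap_nonneg n (n + 1)
  have hgap₂ := h.gap_nonneg (n + 1) n
  have hgap₃ := h.gap_nonneg (n + 2) (n + 1)
  have hgap₄ := h.gap_nonneg n (n + 2)
  have hgap₅ := h.gap_nonneg (n + 2) n
  exact sub_nonneg.mp (hid ▸ by positivity)

theorem longStepPotential_le (h : IsDescentTrajectory γ φ G x) (hγ : 3 / 2 ≤ γ) (hγ2 : γ < 2)
    (n : ℕ) (hn : 0 ≤ rateGap γ n) :
    longStepPotential γ φ G x n ≤ 2 * (φ 0 - φ (n + 1)) := by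
  induction n with
  | zero => exact (h.longStepPotential_zero (by linarith) (by linarith)).le
  | succ n ih =>
    have hpred : 0 ≤ rateGap γ n := by
      contrapose! hn
      exact rateGap_succ_neg (by linarith) hγ2 hn
    linarith [ih hpred, h.longStepPotential_succ_le hγ hγ2 n hn]

theorem linear_rate_of_rateGap_nonneg (h : IsDescentTrajectory γ φ G x) (hγ : 3 / 2 ≤ γ)
    (hγ2 : γ < 2) (n : ℕ) (hn : 0 ≤ rateGap γ n) :
    γ * linearRate γ n * ‖G n‖ ^ 2 ≤ 2 * (φ 0 - φ n) := by
  cases n with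
  | zero => simp [linearRate_zero]
  | succ n =>
    have hγ1 : 1 < γ := by linarith
    have hpred : 0 ≤ rateGap γ n := by
      contrapose! hn
      exact rateGap_succ_neg hγ1 hγ2 hn
    refine le_trans ?_ (h.longStepPotential_le hγ hγ2 n hpred)
    have hgap₁ := h.gap_nonneg n (n + 1)
    have hgap₂ := h.gap_nonneg (n + 1) n
    have hu := linearRate_nonneg hγ1 hγ2 (n + 1)
    have : 0 < γ - 1 := by linarith
    unfold longStepPotential
    simp only [add_assoc]
    exact le_add_of_nonneg_right (by positivity)

theorem sublinear_rate_of_rateGap_succ_neg (h : IsDescentTrajectory γ φ G x) (hγ : 3 / 2 ≤ γ)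
    (hγ2 : γ < 2) (n : ℕ) (hn : 0 ≤ rateGap γ n) (hneg : rateGap γ (n + 1) < 0) :
    γ * (2 * (n + 1 : ℕ)) * ‖G (n + 1)‖ ^ 2 ≤ 2 * (φ 0 - φ (n + 1)) := by
  have hγ0 : 0 < γ := by linarith
  have hw : 0 < 2 - γ := by linarith
  obtain ⟨δ, hδ⟩ : ∃ δ, rateGap γ (n + 1) = -((2 - γ) * δ) :=
    ⟨-rateGap γ (n + 1) / (2 - γ), by field_simp⟩
  have hδ0 : 0 < δ := pos_of_mul_pos_right (by linarith) hw.le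
  have hδu : 0 ≤ linearRate γ (n + 1) - δ := by
    refine nonneg_of_mul_nonneg_right ?_ hw
    linarith [rateGap_succ hγ0.ne' (by linarith) n]
  have hpot := h.longStepPotential_le hγ hγ2 n hn
  -- Cocoercivity with weight `δ` cancels the residual, whose coefficient is negative.
  have hid : longStepPotential γ φ G x n
      = γ * (2 * (n + 1 : ℕ)) * ‖G (n + 1)‖ ^ 2 + 2 * interpolationGap φ G x n (n + 1)
        + 2 * (γ - 1) * (linearRate γ (n + 1) - δ)
          * (interpolationGap φ G x n (n + 1) + interpolationGap φ G x (n + 1) n)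
        + γ * (γ - 1) ^ 2 * δ * (‖G n‖ ^ 2 - ‖G (n + 1)‖ ^ 2) := by
    unfold longStepPotential
    have hmul := mul_rateGap hγ0.ne' (n + 1)
    rw [hδ] at hmul ⊢
    linear_combination δ * h.gap_add_gap n + γ * ‖G (n + 1)‖ ^ 2 * hmul
  have hmono := sub_nonneg.mpr (h.norm_sq_succ_le hγ0 hγ2.le n)
  have hgap₁ := h.gap_nonneg n (n + 1)
  have hgap₂ := h.gap_nonneg (n + 1) n
  have : 0 < γ - 1 := by linarith
  rw [hid] at hpot
  refine le_trans ?_ hpot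
  simp only [add_assoc]
  exact le_add_of_nonneg_right (by positivity)

theorem sublinear_rate_succ (h : IsDescentTrajectory γ φ G x) (hγ1 : 1 < γ) (hγ2 : γ < 2) (n : ℕ)
    (hn : 2 * γ - 3 ≤ 2 * n * (2 - γ)) (ih : γ * (2 * n) * ‖G n‖ ^ 2 ≤ 2 * (φ 0 - φ n)) :
    γ * (2 * (n + 1 : ℕ)) * ‖G (n + 1)‖ ^ 2 ≤ 2 * (φ 0 - φ (n + 1)) := by
  have hw : 0 < 2 - γ := by linarith
  have : 0 < γ - 1 := by linarith
  have hgap₁ := h.gap_nonneg n (n + 1)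
  have hgap₂ := h.gap_nonneg (n + 1) n
  -- The choice of `u'` that kills the residual in the one-step identity.
  have hid := h.one_step_identity (u := 1 / (2 - γ) - 2) (u' := 1 / (2 - γ))
    (by field_simp; ring) n
  rw [mul_one_div_cancel hw.ne', sub_self, zero_mul, add_zero] at hid
  have hcoef : 0 ≤ γ * (2 * n - (1 / (2 - γ) - 2)) := by
    have : 1 / (2 - γ) - 2 ≤ 2 * n := by
      rw [sub_le_iff_le_add, div_le_iff₀ hw]
      linarith
    exact mul_nonneg (by linarith) (sub_nonneg.mpr this)
  have hmono := mul_le_mul_of_nonneg_left (h.norm_sq_succ_le (by linarith) hγ2.le n) hcoef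
  have hslack : 0 ≤ 2 * interpolationGap φ G x n (n + 1) + 2 * (γ - 1) * (1 / (2 - γ))
      * (interpolationGap φ G x n (n + 1) + interpolationGap φ G x (n + 1) n) := by
    positivity
  push_cast
  linarith

theorem sublinear_rate_of_rateGap_neg (h : IsDescentTrajectory γ φ G x) (hγ : 3 / 2 ≤ γ)
    (hγ2 : γ < 2) (n : ℕ) (hn : rateGap γ n < 0) :
    γ * (2 * n) * ‖G n‖ ^ 2 ≤ 2 * (φ 0 - φ n) := by
  induction n with
  | zero => exact absurd (rateGap_zero γ) hn.ne
  | succ n ih =>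
    have hγ1 : 1 < γ := by linarith
    rcases lt_or_ge (rateGap γ n) 0 with hneg | hnonneg
    · have hn := two_mul_sub_three_le_of_rateGap_neg hγ1 hγ2 hneg
      exact h.sublinear_rate_succ hγ1 hγ2 n hn (ih hneg)
    · exact h.sublinear_rate_of_rateGap_succ_neg hγ hγ2 n hnonneg hn

theorem one_add_mul_linearRate_mul_norm_sq_le (h : IsDescentTrajectory γ φ G x) (hγ2 : 2 ≤ γ)
    (n : ℕ) : (1 + γ * linearRate γ n) * ‖G n‖ ^ 2 ≤ ‖G 0‖ ^ 2 := by
  have : 0 < γ - 1 := by linarith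
  rw [one_add_mul_linearRate (by linarith), inv_mul_le_iff₀ (by positivity), mul_comm, mul_comm]
  induction n with
  | zero => simp
  | succ n ih =>
    calc ‖G (n + 1)‖ ^ 2
      _ ≤ (γ - 1) ^ 2 * ‖G n‖ ^ 2 := h.norm_sq_succ_le_sq_mul hγ2 n
      _ ≤ (γ - 1) ^ 2 * (((γ - 1) ^ 2) ^ n * ‖G 0‖ ^ 2) := by gcongr
      _ = ((γ - 1) ^ 2) ^ (n + 1) * ‖G 0‖ ^ 2 := by ring

theorem one_add_mul_min_mul_norm_sq_le (h : IsDescentTrajectory γ φ G x) (hγ : 0 < γ)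
    (hm : ∀ i, m + 1 / 2 * ‖G i‖ ^ 2 ≤ φ i) (n : ℕ) :
    (1 + γ * min (2 * n : ℝ) (linearRate γ n)) * ‖G n‖ ^ 2 ≤ 2 * (φ 0 - m) := by
  have hleft (hrate : γ * (2 * n) * ‖G n‖ ^ 2 ≤ 2 * (φ 0 - φ n)) :
      (1 + γ * min (2 * n : ℝ) (linearRate γ n)) * ‖G n‖ ^ 2 ≤ 2 * (φ 0 - m) :=
    calc _ ≤ (1 + γ * (2 * n)) * ‖G n‖ ^ 2 := by gcongr; exact min_le_left _ _
      _ ≤ 2 * (φ 0 - m) := by linarith [hm n]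
  have hright (hrate : (1 + γ * linearRate γ n) * ‖G n‖ ^ 2 ≤ 2 * (φ 0 - m)) :
      (1 + γ * min (2 * n : ℝ) (linearRate γ n)) * ‖G n‖ ^ 2 ≤ 2 * (φ 0 - m) :=
    calc _ ≤ (1 + γ * linearRate γ n) * ‖G n‖ ^ 2 := by gcongr; exact min_le_right _ _
      _ ≤ 2 * (φ 0 - m) := hrate
  rcases le_total γ (3 / 2) with hshort | hlong
  · exact hleft (by linarith [h.sublinear_rate_of_le_three_halves hγ hshort n])
  rcases le_or_gt 2 γ with hγ2 | hγ2
  · exact hright (by linarith [h.one_add_mul_linearRate_mul_norm_sq_le hγ2 n, hm 0])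
  rcases lt_or_ge (rateGap γ n) 0 with hneg | hnonneg
  · exact hleft (h.sublinear_rate_of_rateGap_neg hlong hγ2 n hneg)
  · exact hright (by linarith [h.linear_rate_of_rateGap_nonneg hlong hγ2 n hnonneg, hm n])

theorem of_gradient_descent {L : ℝ} (hL : 0 < L) {f : E → ℝ} {g : E → E}
    (hg : ∀ z, HasFDerivAt f (innerSL ℝ (g z)) z) (hcvx : ConvexOn ℝ Set.univ f)
    (hsmooth : ConvexOn ℝ Set.univ (fun z => L / 2 * ‖z‖ ^ 2 - f z))
    (hx : ∀ i, x (i + 1) = x i - γ • g (x i)) :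
    IsDescentTrajectory (γ * L) (fun i => f (x i) / L) (fun i => (1 / L) • g (x i)) x where
  step i := by rw [hx, smul_smul, mul_assoc, mul_one_div_cancel hL.ne', mul_one]
  interpolation i j := by
    have h := add_inner_add_norm_sq_sub_le hL hcvx hsmooth (hg (x i)) (hg (x j))
    rw [← smul_sub, norm_smul, mul_pow, Real.norm_eq_abs, sq_abs, real_inner_smul_left,
      le_div_iff₀ hL]
    refine le_trans (le_of_eq ?_) h
    field_simp

end IsDescentTrajectory

end Trajectory

theorem one_add_mul_min_linearRate_pos {γ : ℝ} (hγ : 0 < γ) (hγ1 : γ ≠ 1) (n : ℕ) :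
    0 < 1 + γ * min (2 * n : ℝ) (linearRate γ n) := by
  have : 0 < (γ - 1) ^ 2 := sq_pos_of_ne_zero (sub_ne_zero.mpr hγ1)
  rw [mul_min_of_nonneg _ _ hγ.le, ← min_add_add_left, one_add_mul_linearRate hγ.ne']
  exact lt_min (by positivity) (by positivity)

theorem iterate_eq_of_forall_lt_succ {α : Type*} {T : α → α} {x : ℕ → α} {N : ℕ}
    (hx : ∀ i < N, x (i + 1) = T (x i)) : T^[N] (x 0) = x N := by
  induction N with
  | zero => rfl
  | succ N ih =>
    rw [Function.iterate_succ_apply', ih fun i hi => hx i (by lia), hx N (by lia)]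

theorem gd_convex_rate_general {E : Type*} [NormedAddCommGroup E] [InnerProductSpace ℝ E]
    {L : ℝ} (hL : 0 < L) {f : E → ℝ} {g : E → E} (hg : ∀ z, HasFDerivAt f (innerSL ℝ (g z)) z)
    (hcvx : ConvexOn ℝ Set.univ f)
    (hsmooth : ConvexOn ℝ Set.univ (fun z => L / 2 * ‖z‖ ^ 2 - f z))
    {m : ℝ} (hm : ∀ z, m ≤ f z) {γ : ℝ} (hγ : 0 < γ) (hγL1 : γ * L ≠ 1)
    {N : ℕ} {x : ℕ → E} (hx : ∀ i < N, x (i + 1) = x i - γ • g (x i)) :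
    1 / (2 * L) * ‖g (x N)‖ ^ 2 ≤
      (f (x 0) - m) /
        (1 + γ * L *
          min (2 * (N : ℝ)) ((-1 + (1 - γ * L) ^ (-(2 * (N : ℤ)))) / (γ * L))) := by
  have htraj := IsDescentTrajectory.of_gradient_descent hL hg hcvx hsmooth
    (x := fun i => (fun z => z - γ • g z)^[i] (x 0)) fun i => Function.iterate_succ_apply' _ i _
  have hlower (z : E) : m / L + 1 / 2 * ‖(1 / L) • g z‖ ^ 2 ≤ f z / L := by
    have h := add_norm_sq_gradient_le_of_forall_le hL hsmooth (hg z) hm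
    rw [norm_smul, mul_pow, Real.norm_eq_abs, sq_abs, le_div_iff₀ hL]
    refine le_trans (le_of_eq ?_) h
    field_simp
  have hrate := htraj.one_add_mul_min_mul_norm_sq_le (mul_pos hγ hL) (fun _ => hlower _) N
  simp only [iterate_eq_of_forall_lt_succ (T := fun z => z - γ • g z) hx,
    Function.iterate_zero_apply, norm_smul, mul_pow, Real.norm_eq_abs, sq_abs] at hrate
  change _ ≤ _ / (1 + γ * L * min (2 * (N : ℝ)) (linearRate (γ * L) N))
  rw [le_div_iff₀ (one_add_mul_min_linearRate_pos (mul_pos hγ hL) hγL1 N)]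
  have hscaled := mul_le_mul_of_nonneg_left hrate (by positivity : 0 ≤ L / 2)
  convert hscaled using 1 <;> field_simp

/-- **Exact worst-case rate of gradient descent on smooth convex functions
(Theorem 1 / `corollary:cvx_rate`).**
Let `f ∈ F_{0,L}` (convex and `L`-smooth from above), bounded below, and run `N ≥ 1`
steps of gradient descent with constant stepsize `γ`, `0 < γL < 2`, `γL ≠ 1`. Then
`(1/(2L))‖∇f(x_N)‖² ≤ (f(x₀) − f_*)/(1 + γL·min{2N, (−1+(1−γL)^{−2N})/(γL)})`. -/
theorem gd_convex_rate
    {E : Type*} [NormedAddCommGroup E] [InnerProductSpace ℝ E] [CompleteSpace E]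
    (L : ℝ) (hL : 0 < L) (f : E → ℝ) (hdiff : Differentiable ℝ f)
    (hcvx : ConvexOn ℝ Set.univ f)
    (hsmooth : ConvexOn ℝ Set.univ (fun z => L / 2 * ‖z‖ ^ 2 - f z))
    (hbdd : BddBelow (Set.range f))
    (N : ℕ) (hN : 1 ≤ N)
    (γ : ℝ) (hγ : 0 < γ) (hγL : γ * L < 2) (hγL1 : γ * L ≠ 1)
    (x : ℕ → E) (hx : ∀ i < N, x (i + 1) = x i - γ • gradient f (x i)) :
    1 / (2 * L) * ‖gradient f (x N)‖ ^ 2 ≤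
      (f (x 0) - ⨅ y, f y) /
        (1 + γ * L *
          min (2 * (N : ℝ)) ((-1 + (1 - γ * L) ^ (-(2 * (N : ℤ)))) / (γ * L))) :=
  gd_convex_rate_general hL (fun z => (hdiff z).hasGradientAt.hasFDerivAt) hcvx hsmooth
    (ciInf_le hbdd) hγ hγL1 hx
end

section
/- Let L > 0 and let f : E → ℝ be a differentiable function on a real inner product space E with f convex and x ↦ (L/2)‖x‖² − f(x) convex (f ∈ F_{0,L}), and assume f_* := inf_x f(x) > −∞. Fix an integer N ≥ 1 and stepsizes γ_0,…,γ_{N−1} > 0 with γ_i L ∈ (0, 3/2] for every i, and let x_{i+1} = x_i − γ_i ∇f(x_i). Then (1/(2L))·‖∇f(x_N)‖² ≤ (f(x_0) − f_*) / ( 1 + 2·Σ_{i=0}^{N−1} γ_i L ). -/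
/-!
Convexity and the quadratic upper bound, tested at `y - (∇f y - ∇f x) / L`, give the interpolation
inequality `f x + ⟪∇f x, y - x⟫ + ‖∇f x - ∇f y‖² / (2L) ≤ f y`. Applied to two consecutive iterates
`x`, `x⁺` of gradient descent with stepsize `γ ≤ 3 / (2L)`, it yields both `‖∇f x⁺‖ ≤ ‖∇f x‖` and
`f x⁺ + γ ‖∇f x⁺‖² ≤ f x`. Hence the potential `f (x n) + (∑ i < n, γ i) ‖∇f (x n)‖²` does not
increase with `n`, while at the last iterate `f (x N) - inf f ≥ ‖∇f (x N)‖² / (2L)`.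
-/

open Set Filter Topology
open scoped InnerProductSpace

theorem add_lineDeriv_add_modulus_le_of_uniformConvexOn {E : Type*} [NormedAddCommGroup E]
    [NormedSpace ℝ E] {s : Set E} {φ : ℝ → ℝ} {f : E → ℝ} {f' : ℝ} {x y : E}
    (hf : UniformConvexOn s φ f) (hx : x ∈ s) (hy : y ∈ s)
    (hf' : HasLineDerivAt ℝ f f' x (y - x)) : f x + f' + φ ‖x - y‖ ≤ f y := by
  have hslope : ∀ᶠ t : ℝ in 𝓝[>] 0,
      t⁻¹ • (f (x + t • (y - x)) - f x) ≤ f y - f x - (1 - t) * φ ‖x - y‖ := by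
    filter_upwards [Ioo_mem_nhdsGT (zero_lt_one' ℝ)] with t ⟨ht₀, ht₁⟩
    have hconv := hf.2 hx hy (sub_nonneg.2 ht₁.le) ht₀.le (sub_add_cancel 1 t)
    rw [show (1 - t) • x + t • y = x + t • (y - x) by module] at hconv
    simp only [smul_eq_mul] at hconv ⊢
    rw [inv_mul_le_iff₀ ht₀]
    linarith
  have hlim : Tendsto (fun t : ℝ => f y - f x - (1 - t) * φ ‖x - y‖) (𝓝[>] 0)
      (𝓝 (f y - f x - φ ‖x - y‖)) :=
    (Continuous.tendsto' (by fun_prop) 0 _ (by ring)).mono_left nhdsWithin_le_nhds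
  linarith [le_of_tendsto_of_tendsto hf'.tendsto_slope_zero_right hlim hslope]

section SmoothConvex

variable {E : Type*} [NormedAddCommGroup E] [InnerProductSpace ℝ E]

/-- The vector `g` is the gradient of `f` at `x` in the sense of Gâteaux: it represents all
directional derivatives of `f` at `x`. Unlike Mathlib's `HasGradientAt`, this notion makes sense
in an inner product space that is not complete. -/
def HasGateauxGradientAt (f : E → ℝ) (g x : E) : Prop :=
  ∀ v, HasLineDerivAt ℝ f ⟪g, v⟫_ℝ x v

variable {f : E → ℝ} {L : ℝ} {s : Set E} {x y g : E}

theorem HasGateauxGradientAt.of_hasGradientAt [CompleteSpace E] (h : HasGradientAt f g x) :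
    HasGateauxGradientAt f g x :=
  fun v => h.hasFDerivAt.hasLineDerivAt v

theorem add_inner_le_of_convexOn (hf : ConvexOn ℝ s f) (hg : HasGateauxGradientAt f g x)
    (hx : x ∈ s) (hy : y ∈ s) : f x + ⟪g, y - x⟫_ℝ ≤ f y := by
  simpa using add_lineDeriv_add_modulus_le_of_uniformConvexOn
    (uniformConvexOn_zero.2 hf) hx hy (hg (y - x))

theorem le_add_inner_add_norm_sq_of_convexOn_sub
    (hf : ConvexOn ℝ s fun z => L / 2 * ‖z‖ ^ 2 - f z) (hg : HasGateauxGradientAt f g x)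
    (hx : x ∈ s) (hy : y ∈ s) : f y ≤ f x + ⟪g, y - x⟫_ℝ + L / 2 * ‖y - x‖ ^ 2 := by
  have hneg : StrongConvexOn s (-L) (-f) := by
    rw [strongConvexOn_iff_convex]
    convert hf using 2
    simp only [Pi.neg_apply]
    ring
  have hbound := add_lineDeriv_add_modulus_le_of_uniformConvexOn hneg hx hy
    (HasDerivAt.neg (hg (y - x)))
  rw [norm_sub_rev x y] at hbound
  simp only [Pi.neg_apply] at hbound
  linarith

theorem apply_sub_inv_smul_le_of_convexOn_sub (hL : 0 < L)
    (hf : ConvexOn ℝ univ fun z => L / 2 * ‖z‖ ^ 2 - f z)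
    (hg : HasGateauxGradientAt f g x) (v : E) :
    f (x - L⁻¹ • v) ≤ f x - L⁻¹ * ⟪g, v⟫_ℝ + 1 / (2 * L) * ‖v‖ ^ 2 := by
  have hupper := le_add_inner_add_norm_sq_of_convexOn_sub hf hg (mem_univ x)
    (mem_univ (x - L⁻¹ • v))
  rw [sub_sub_cancel_left, inner_neg_right, real_inner_smul_right, norm_neg,
    norm_smul_of_nonneg (inv_nonneg.2 hL.le)] at hupper
  have hcoef : L / 2 * (L⁻¹ * ‖v‖) ^ 2 = 1 / (2 * L) * ‖v‖ ^ 2 := by field_simp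
  linarith

theorem norm_sq_le_sub_iInf_of_convexOn_sub (hL : 0 < L)
    (hf : ConvexOn ℝ univ fun z => L / 2 * ‖z‖ ^ 2 - f z)
    (hbdd : BddBelow (range f)) (hg : HasGateauxGradientAt f g x) :
    1 / (2 * L) * ‖g‖ ^ 2 ≤ f x - ⨅ y, f y := by
  have hstep := apply_sub_inv_smul_le_of_convexOn_sub hL hf hg g
  have hcoef : L⁻¹ * ‖g‖ ^ 2 = 2 * (1 / (2 * L) * ‖g‖ ^ 2) := by field_simp
  rw [real_inner_self_eq_norm_sq, hcoef] at hstep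
  linarith [ciInf_le hbdd (x - L⁻¹ • g)]

/-- The class `F_{0,L}` of convex functions with curvature at most `L`. Differentiability is not
part of the definition: gradients enter through `HasGateauxGradientAt`. -/
structure IsSmoothConvex (L : ℝ) (f : E → ℝ) : Prop where
  convexOn : ConvexOn ℝ univ f
  convexOn_sub : ConvexOn ℝ univ fun z => L / 2 * ‖z‖ ^ 2 - f z

namespace IsSmoothConvex

section Gradients

variable {gx gy : E}

theorem add_inner_add_norm_sq_le (hL : 0 < L) (hf : IsSmoothConvex L f)
    (hgx : HasGateauxGradientAt f gx x) (hgy : HasGateauxGradientAt f gy y) :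
    f x + ⟪gx, y - x⟫_ℝ + 1 / (2 * L) * ‖gx - gy‖ ^ 2 ≤ f y := by
  have hlower := add_inner_le_of_convexOn hf.convexOn hgx (mem_univ x)
    (mem_univ (y - L⁻¹ • (gy - gx)))
  have hupper := apply_sub_inv_smul_le_of_convexOn_sub hL hf.convexOn_sub hgy (gy - gx)
  rw [sub_right_comm, inner_sub_right, real_inner_smul_right] at hlower
  have hself : ⟪gy, gy - gx⟫_ℝ - ⟪gx, gy - gx⟫_ℝ = ‖gy - gx‖ ^ 2 := by
    rw [← inner_sub_left, real_inner_self_eq_norm_sq]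
  have hcoef : L⁻¹ * ‖gy - gx‖ ^ 2 = 2 * (1 / (2 * L) * ‖gy - gx‖ ^ 2) := by field_simp
  rw [norm_sub_rev gx gy]
  linear_combination hlower + hupper - L⁻¹ * hself + hcoef

theorem norm_sq_le_inner_sub_sub (hL : 0 < L) (hf : IsSmoothConvex L f)
    (hgx : HasGateauxGradientAt f gx x) (hgy : HasGateauxGradientAt f gy y) :
    1 / L * ‖gx - gy‖ ^ 2 ≤ ⟪gx - gy, x - y⟫_ℝ := by
  have hxy := hf.add_inner_add_norm_sq_le hL hgx hgy
  have hyx := hf.add_inner_add_norm_sq_le hL hgy hgx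
  rw [norm_sub_rev gy gx] at hyx
  rw [← neg_sub x y, inner_neg_right] at hxy
  have hcoef : 1 / L * ‖gx - gy‖ ^ 2 = 2 * (1 / (2 * L) * ‖gx - gy‖ ^ 2) := by field_simp
  rw [inner_sub_left, hcoef]
  linarith

end Gradients

section GradientStep

variable {γ : ℝ} {g' : E}

theorem norm_gradient_step_le (hL : 0 < L) (hf : IsSmoothConvex L f) (hγ : 0 < γ)
    (hγL : γ * L ≤ 2) (hg : HasGateauxGradientAt f g x)
    (hg' : HasGateauxGradientAt f g' (x - γ • g)) : ‖g'‖ ≤ ‖g‖ := by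
  have hcoco := hf.norm_sq_le_inner_sub_sub hL hg hg'
  rw [sub_sub_cancel, real_inner_smul_right] at hcoco
  have hstep : γ / 2 ≤ 1 / L := by
    rw [div_le_div_iff₀ two_pos hL]
    linarith
  have hinner : ‖g - g'‖ ^ 2 ≤ 2 * ⟪g - g', g⟫_ℝ := by
    refine le_of_mul_le_mul_left ?_ hγ
    linarith [mul_le_mul_of_nonneg_right hstep (sq_nonneg ‖g - g'‖)]
  have hexpand : ‖g'‖ ^ 2 = ‖g‖ ^ 2 - 2 * ⟪g - g', g⟫_ℝ + ‖g - g'‖ ^ 2 := by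
    rw [real_inner_comm, ← norm_sub_sq_real, sub_sub_cancel]
  exact le_of_sq_le_sq (by linarith) (norm_nonneg g)

theorem gradient_step_add_norm_sq_le (hL : 0 < L) (hf : IsSmoothConvex L f)
    (hγL : γ * L ≤ 3 / 2) (hg : HasGateauxGradientAt f g x)
    (hg' : HasGateauxGradientAt f g' (x - γ • g)) :
    f (x - γ • g) + γ * ‖g'‖ ^ 2 ≤ f x := by
  have hcoco := hf.norm_sq_le_inner_sub_sub hL hg hg'
  have hdecrease := hf.add_inner_add_norm_sq_le hL hg' hg
  rw [sub_sub_cancel, real_inner_smul_right] at hcoco hdecrease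
  rw [norm_sub_rev] at hdecrease
  -- The two inequalities contribute `1 / L` and `1 / (2 * L)`: hence the threshold `3 / 2`.
  have hstep : γ ≤ 1 / L + 1 / (2 * L) := by
    field_simp
    linarith
  have hexpand : ‖g'‖ ^ 2 = ‖g - g'‖ ^ 2 - ⟪g - g', g⟫_ℝ + ⟪g', g⟫_ℝ := by
    rw [← real_inner_self_eq_norm_sq, ← real_inner_self_eq_norm_sq]
    simp only [inner_sub_left, inner_sub_right, real_inner_comm g g']
    ring
  rw [hexpand]
  linarith [mul_le_mul_of_nonneg_right hstep (sq_nonneg ‖g - g'‖)]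

theorem gradient_step_potential_le (hL : 0 < L) (hf : IsSmoothConvex L f) (hγ : 0 < γ)
    (hγL : γ * L ≤ 3 / 2) (hg : HasGateauxGradientAt f g x)
    (hg' : HasGateauxGradientAt f g' (x - γ • g)) {c : ℝ} (hc : 0 ≤ c) :
    f (x - γ • g) + (c + γ) * ‖g'‖ ^ 2 ≤ f x + c * ‖g‖ ^ 2 := by
  have hdecrease := hf.gradient_step_add_norm_sq_le hL hγL hg hg'
  have hnorm : c * ‖g'‖ ^ 2 ≤ c * ‖g‖ ^ 2 := by
    gcongr
    exact hf.norm_gradient_step_le hL hγ (by linarith) hg hg'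
  linarith

end GradientStep

theorem gradientDescent_potential_le {N : ℕ} {γ : ℕ → ℝ} {x g : ℕ → E} (hL : 0 < L)
    (hf : IsSmoothConvex L f) (hγ : ∀ i < N, 0 < γ i ∧ γ i * L ≤ 3 / 2)
    (hg : ∀ i ≤ N, HasGateauxGradientAt f (g i) (x i))
    (hx : ∀ i < N, x (i + 1) = x i - γ i • g i) :
    f (x N) + (∑ i ∈ Finset.range N, γ i) * ‖g N‖ ^ 2 ≤ f (x 0) := by
  induction N with
  | zero => simp
  | succ N ih =>
    obtain ⟨hpos, hle⟩ := hγ N N.lt_succ_self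
    have hsum : 0 ≤ ∑ i ∈ Finset.range N, γ i := Finset.sum_nonneg fun i hi =>
      (hγ i (Nat.lt_succ_of_lt (Finset.mem_range.1 hi))).1.le
    have hnext := hg (N + 1) le_rfl
    rw [hx N N.lt_succ_self] at hnext
    rw [hx N N.lt_succ_self, Finset.sum_range_succ]
    calc
      _ ≤ f (x N) + (∑ i ∈ Finset.range N, γ i) * ‖g N‖ ^ 2 :=
        hf.gradient_step_potential_le hL hpos hle (hg N N.le_succ) hnext hsum
      _ ≤ f (x 0) :=
        ih (fun i hi => hγ i (Nat.lt_succ_of_lt hi)) (fun i hi => hg i (Nat.le_succ_of_le hi))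
          fun i hi => hx i (Nat.lt_succ_of_lt hi)

end IsSmoothConvex

theorem gd_convex_rate_variable_stepsizes_general {N : ℕ} {γ : ℕ → ℝ} {x g : ℕ → E}
    (hL : 0 < L) (hf : IsSmoothConvex L f) (hbdd : BddBelow (range f))
    (hγ : ∀ i < N, 0 < γ i ∧ γ i * L ≤ 3 / 2)
    (hg : ∀ i ≤ N, HasGateauxGradientAt f (g i) (x i))
    (hx : ∀ i < N, x (i + 1) = x i - γ i • g i) :
    1 / (2 * L) * ‖g N‖ ^ 2 ≤
      (f (x 0) - ⨅ y, f y) / (1 + 2 * ∑ i ∈ Finset.range N, γ i * L) := by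
  have hpotential := hf.gradientDescent_potential_le hL hγ hg hx
  have hgap := norm_sq_le_sub_iInf_of_convexOn_sub hL hf.convexOn_sub hbdd (hg N le_rfl)
  have hsum : 0 ≤ ∑ i ∈ Finset.range N, γ i := Finset.sum_nonneg fun i hi =>
    (hγ i (Finset.mem_range.1 hi)).1.le
  rw [← Finset.sum_mul, le_div_iff₀ (by positivity)]
  calc
    1 / (2 * L) * ‖g N‖ ^ 2 * (1 + 2 * ((∑ i ∈ Finset.range N, γ i) * L)) =
        1 / (2 * L) * ‖g N‖ ^ 2 + (∑ i ∈ Finset.range N, γ i) * ‖g N‖ ^ 2 := by field_simp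
    _ ≤ f (x 0) - ⨅ y, f y := by linarith

end SmoothConvex

/-- **Rate of gradient descent with variable stepsizes on smooth convex functions
(Corollary 1 / `corr:cvx_rates_variable_stepsizes`).**
Let `f ∈ F_{0,L}` be bounded below and run `N ≥ 1` steps with stepsizes `γ_i`,
`0 < γ_i L ≤ 3/2`. Then
`(1/(2L))‖∇f(x_N)‖² ≤ (f(x₀) − f_*)/(1 + 2·Σ_{i<N} γ_i L)`. -/
theorem gd_convex_rate_variable_stepsizes
    {E : Type*} [NormedAddCommGroup E] [InnerProductSpace ℝ E] [CompleteSpace E]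
    (L : ℝ) (hL : 0 < L) (f : E → ℝ) (hdiff : Differentiable ℝ f)
    (hcvx : ConvexOn ℝ Set.univ f)
    (hsmooth : ConvexOn ℝ Set.univ (fun z => L / 2 * ‖z‖ ^ 2 - f z))
    (hbdd : BddBelow (Set.range f))
    (N : ℕ) (hN : 1 ≤ N)
    (γ : ℕ → ℝ) (hγ : ∀ i < N, 0 < γ i ∧ γ i * L ≤ 3 / 2)
    (x : ℕ → E) (hx : ∀ i < N, x (i + 1) = x i - γ i • gradient f (x i)) :
    1 / (2 * L) * ‖gradient f (x N)‖ ^ 2 ≤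
      (f (x 0) - ⨅ y, f y) / (1 + 2 * ∑ i ∈ Finset.range N, γ i * L) :=
  gd_convex_rate_variable_stepsizes_general hL ⟨hcvx, hsmooth⟩ hbdd hγ
    (fun i _ => .of_hasGradientAt (hdiff (x i)).hasGradientAt) hx
end

section
/- Let L > 0 and μ < L, set κ := μ/L, and let f : E → ℝ be a differentiable function on a real inner product space E with f ∈ F_{μ,L}. Fix an integer k ≥ 1 and a stepsize γ > 0 with γL ∈ (1, 2/(1 + max{κ,0})) such that T_i(γL, κ) ≥ 0 for all integers 1 ≤ i ≤ k (equivalently, γL ≥ γ̄_k, the k-th stepsize threshold). Let x_0, x_1, …, x_{k+1} be generated by x_{i+1} = x_i − γ∇f(x_i), and write ρ := 1 − γL, η := 1 − γμ (with γμ := γ·μ). Then (f(x_0) − f(x_{k+1}))/γ ≥ (−η²ρ²·T_{k+1}(γL,κ)/(η² − ρ²)) · ‖∇f(x_k)‖²/2 + ((T_k(γL,κ) + (η − ρ))/(η² − ρ²)) · ‖∇f(x_{k+1})‖²/2. -/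
/-- `E_k(x) := Σ_{j=1}^{2k} x^{−j}` (so `E_0 = 0`). -/
noncomputable def Efun (k : ℕ) (x : ℝ) : ℝ := ∑ j ∈ Finset.Icc 1 (2 * k), x ^ (-(j : ℤ))

/-- `T_k(t, κ) := E_k(1 − κ·t) − E_k(1 − t)`. -/
noncomputable def Tfun (k : ℕ) (t κ : ℝ) : ℝ := Efun k (1 - κ * t) - Efun k (1 - t)

/-! After rescaling `f` and its gradients by `γ` the stepsize is one, and convexity enters only
through the interpolation inequality of `F_{μ,L}` between pairs of iterates. The asserted inequality
is a nonnegative combination of these inequalities, in both directions, between iterates at distance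
one and two.

For three consecutive iterates some combination of the slacks, with multipliers of both signs, is
free of function values and equal to
`((η² + ρ²)‖g_{i+1}‖² - η²ρ²‖g_i‖² - ‖g_{i+2}‖²) / 2`. Adding `T_{i+1}` times this identity to the
one-step descent identities makes all intermediate gradient norms cancel, because
`η²ρ²T_{i+2} - (η² + ρ²)T_{i+1} + T_i = -(η - ρ)(1 + η)(1 + ρ)`. In the total, every slack has a
nonnegative multiplier: at distance two this is `0 ≤ T_i`, and at distance one it follows from
bounds on `E_i(η)` and `E_i(ρ)`. -/

section Efun

lemma Efun_zero (x : ℝ) : Efun 0 x = 0 := by simp [Efun]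

lemma Efun_succ_eq_add (k : ℕ) (x : ℝ) :
    Efun (k + 1) x = Efun k x + (x ^ (2 * k + 1))⁻¹ + (x ^ (2 * k + 2))⁻¹ := by
  simp only [Efun, zpow_neg, zpow_natCast]
  rw [show 2 * (k + 1) = 2 * k + 1 + 1 by ring, Finset.sum_Icc_succ_top (by lia),
    Finset.sum_Icc_succ_top (by lia)]

-- Consecutive terms pair up: `x^{-(2i+1)} + x^{-(2i+2)} = (1 + x) x^{-2(i+1)}`.
lemma sq_mul_Efun (k : ℕ) {x : ℝ} (hx : x ≠ 0) :
    x ^ 2 * Efun k x = (1 + x) * ∑ i ∈ Finset.range k, (x ^ 2)⁻¹ ^ i := by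
  induction k with
  | zero => simp [Efun_zero]
  | succ k ih =>
    rw [Efun_succ_eq_add, Finset.sum_range_succ, mul_add (1 + x), ← ih, inv_pow, ← pow_mul]
    field_simp
    ring

lemma sq_mul_Efun_succ (k : ℕ) {x : ℝ} (hx : x ≠ 0) :
    x ^ 2 * Efun (k + 1) x = Efun k x + 1 + x := by
  rw [sq_mul_Efun _ hx, geom_sum_succ, mul_add, mul_left_comm, ← sq_mul_Efun k hx,
    inv_mul_cancel_left₀ (pow_ne_zero 2 hx), mul_one, add_assoc]

lemma one_sub_mul_Efun (k : ℕ) {x : ℝ} (hx : x ≠ 0) :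
    (1 - x) * Efun k x = (x ^ 2)⁻¹ ^ k - 1 := by
  rw [← mul_geom_sum]
  apply mul_left_cancel₀ (pow_ne_zero 2 hx)
  rw [mul_left_comm, sq_mul_Efun k hx]
  field_simp
  ring

lemma Efun_nonneg (k : ℕ) {x : ℝ} (hx : x ≠ 0) (hx' : -1 ≤ x) : 0 ≤ Efun k x := by
  refine nonneg_of_mul_nonneg_right ?_ (pow_pos (abs_pos.mpr hx) 2)
  rw [sq_abs, sq_mul_Efun k hx]
  exact mul_nonneg (by linarith) (by positivity)

lemma sub_one_mul_le_of_le_Efun {k : ℕ} {x s : ℝ} (hx : 0 < x) (hs : 0 ≤ s)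
    (hsE : s ≤ Efun k x) : (x - 1) * s ≤ x := by
  rcases le_total x 1 with hx1 | hx1
  · exact (mul_nonpos_of_nonpos_of_nonneg (sub_nonpos.mpr hx1) hs).trans hx.le
  · have hmono : (x - 1) * s ≤ (x - 1) * Efun k x :=
      mul_le_mul_of_nonneg_left hsE (sub_nonneg.mpr hx1)
    have hpow : 0 ≤ (x ^ 2)⁻¹ ^ k := by positivity
    linarith [one_sub_mul_Efun k hx.ne']

variable {x y : ℝ} (hy : y ≠ 0) (hyx : |y| ≤ x)
include hy hyx

lemma inv_sq_le_inv_sq_of_abs_le : (x ^ 2)⁻¹ ≤ (y ^ 2)⁻¹ :=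
  inv_anti₀ (by positivity) (sq_le_sq' (by linarith [neg_abs_le y]) ((le_abs_self y).trans hyx))

lemma one_sub_mul_Efun_le (k : ℕ) : (1 - x) * Efun k x ≤ (1 - y) * Efun k y := by
  have hx : x ≠ 0 := ((abs_pos.mpr hy).trans_le hyx).ne'
  have hinv := inv_sq_le_inv_sq_of_abs_le hy hyx
  rw [one_sub_mul_Efun k hx, one_sub_mul_Efun k hy]
  gcongr

lemma one_add_mul_sq_mul_Efun_le (hy' : -1 ≤ y) (k : ℕ) :
    (1 + y) * (x ^ 2 * Efun k x) ≤ (1 + x) * (y ^ 2 * Efun k y) := by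
  have hx : 0 < x := (abs_pos.mpr hy).trans_le hyx
  rw [sq_mul_Efun k hx.ne', sq_mul_Efun k hy, mul_left_comm]
  have hinv := inv_sq_le_inv_sq_of_abs_le hy hyx
  have hy1 : 0 ≤ 1 + y := by linarith
  gcongr

end Efun

/-- The quantity `T_k`, expressed through `η = 1 - κt` and `ρ = 1 - t` instead of `t` and `κ`. -/
noncomputable def Ediff (k : ℕ) (η ρ : ℝ) : ℝ := Efun k η - Efun k ρ

section Ediff

variable {η ρ : ℝ}

lemma Ediff_zero (η ρ : ℝ) : Ediff 0 η ρ = 0 := by simp [Ediff, Efun_zero]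

lemma Tfun_eq_Ediff (k : ℕ) (t κ : ℝ) : Tfun k t κ = Ediff k (1 - κ * t) (1 - t) := rfl

variable (hη : η ≠ 0) (hρ : ρ ≠ 0)
include hη hρ

lemma sq_mul_sq_mul_Ediff_succ (k : ℕ) :
    η ^ 2 * ρ ^ 2 * Ediff (k + 1) η ρ =
      ρ ^ 2 * (Efun k η + 1 + η) - η ^ 2 * (Efun k ρ + 1 + ρ) := by
  rw [Ediff, ← sq_mul_Efun_succ k hη, ← sq_mul_Efun_succ k hρ]
  ring

lemma Ediff_succ_eq_div (k : ℕ) :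
    Ediff (k + 1) η ρ =
      (ρ ^ 2 * (Efun k η + 1 + η) - η ^ 2 * (Efun k ρ + 1 + ρ)) / (η ^ 2 * ρ ^ 2) := by
  rw [eq_div_iff (by positivity), mul_comm, sq_mul_sq_mul_Ediff_succ hη hρ]

lemma sq_mul_sq_mul_Ediff_add_two (k : ℕ) :
    η ^ 2 * ρ ^ 2 * Ediff (k + 2) η ρ =
      (η ^ 2 + ρ ^ 2) * Ediff (k + 1) η ρ - Ediff k η ρ - (η - ρ) * (1 + η) * (1 + ρ) := by
  rw [sq_mul_sq_mul_Ediff_succ hη hρ (k + 1)]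
  simp only [Ediff]
  linear_combination -sq_mul_Efun_succ k hη + sq_mul_Efun_succ k hρ

end Ediff

section Weights

/-- The multiplier of the interpolation inequality bounding `f (x i) - f (x (i + 1))` from below
in the aggregated proof, where `s` stands for `T_i` and `t` for `T_{i+1}`, except that
`t = 0` at the last step. -/
noncomputable def forwardWeight (η ρ s t : ℝ) : ℝ :=
  (η - ρ) * (η + (s + η * ρ * t) / 2) - η * (η + ρ) * (s + t) / 2

/-- The multiplier of the interpolation inequality bounding `f (x (i + 1)) - f (x i)` from below
in the aggregated proof, where `s` stands for `T_i` and `t` for `T_{i+1}`, except that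
`t = 0` at the last step. -/
noncomputable def backwardWeight (η ρ s t : ℝ) : ℝ :=
  (η - ρ) * (-ρ + (s + η * ρ * t) / 2) + ρ * (η + ρ) * (s + t) / 2

variable {η ρ : ℝ}

-- Here and in `backwardWeight_Ediff` the terms are grouped so that each summand is nonnegative when
-- `-1 < ρ < 0` and `-ρ < η`.
lemma forwardWeight_Ediff (hη : η ≠ 0) (hρ : ρ ≠ 0) (k : ℕ) :
    forwardWeight η ρ (Ediff k η ρ) (Ediff (k + 1) η ρ) =
      (η + ρ) / (2 * η * ρ ^ 2) *
        ((η - ρ) * (ρ ^ 2 + (η + ρ)) + ρ ^ 2 * η * (η - ρ - (η - 1) * Efun k η) +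
          (η * (η * (1 - ρ + ρ ^ 2) + ρ ^ 2) * Efun k ρ - ρ ^ 2 * (1 + ρ) * Efun k η)) := by
  rw [forwardWeight, Ediff_succ_eq_div hη hρ, Ediff]
  field_simp
  ring

lemma backwardWeight_Ediff (hη : η ≠ 0) (hρ : ρ ≠ 0) (k : ℕ) :
    backwardWeight η ρ (Ediff k η ρ) (Ediff (k + 1) η ρ) =
      (η + ρ) / (2 * η ^ 2 * -ρ) *
        ((η - ρ) * (η ^ 2 * (1 + ρ) + (η + ρ)) + -ρ * (1 + ρ) * η ^ 2 * Efun k η +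
          (η ^ 2 * (η + 1 - ρ + ρ ^ 2) * Efun k ρ - ρ ^ 2 * ((1 - η) * Efun k η))) := by
  rw [backwardWeight, Ediff_succ_eq_div hη hρ, Ediff]
  field_simp
  ring

variable (hρ : ρ < 0) (hηρ : -ρ < η)
include hρ hηρ

lemma forwardWeight_zero_right_nonneg {k : ℕ} {s : ℝ} (hs : 0 ≤ s) (hsE : s ≤ Efun k η) :
    0 ≤ forwardWeight η ρ s 0 := by
  have hη : 0 < η := by linarith
  have hbound : (η - 1) * s ≤ η := sub_one_mul_le_of_le_Efun hη hs hsE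
  have hsplit : forwardWeight η ρ s 0 =
      (η - ρ) * η / 2 + (η - ρ) * (η - (η - 1) * s) / 2 + s * (η * -ρ) := by
    rw [forwardWeight]
    ring
  have hlast : 0 ≤ s * (η * -ρ) := mul_nonneg hs (mul_nonneg hη.le (by linarith))
  have hfirst : 0 ≤ (η - ρ) * η := mul_nonneg (by linarith) hη.le
  have hmid : 0 ≤ (η - ρ) * (η - (η - 1) * s) := mul_nonneg (by linarith) (by linarith)
  linarith

variable (hρ' : -1 < ρ)
include hρ'

lemma backwardWeight_zero_right_nonneg {s : ℝ} (hs : 0 ≤ s) : 0 ≤ backwardWeight η ρ s 0 := by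
  have hsplit : backwardWeight η ρ s 0 =
      -ρ * (η - ρ) + s * (-ρ + (1 + ρ) * (η + ρ) / 2) := by
    rw [backwardWeight]
    ring
  rw [hsplit]
  have hprod : 0 ≤ (1 + ρ) * (η + ρ) := mul_nonneg (by linarith) (by linarith)
  exact add_nonneg (mul_nonneg (by linarith) (by linarith)) (mul_nonneg hs (by linarith))

lemma forwardWeight_Ediff_nonneg (k : ℕ) :
    0 ≤ forwardWeight η ρ (Ediff k η ρ) (Ediff (k + 1) η ρ) := by
  have hη : 0 < η := by linarith
  have hEη : 0 ≤ Efun k η := Efun_nonneg k hη.ne' (by linarith)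
  have hEρ : 0 ≤ Efun k ρ := Efun_nonneg k hρ.ne hρ'.le
  have hbound : (η - 1) * Efun k η ≤ η := sub_one_mul_le_of_le_Efun hη hEη le_rfl
  have hsq : ρ ^ 2 ≤ η ^ 2 := sq_le_sq' (by linarith) (by linarith)
  have hE : ρ ^ 2 * (1 + ρ) * Efun k η ≤ η * (η * (1 - ρ + ρ ^ 2) + ρ ^ 2) * Efun k ρ :=
    calc ρ ^ 2 * (1 + ρ) * Efun k η
        ≤ (1 + ρ) * (η ^ 2 * Efun k η) := by
          rw [mul_comm (ρ ^ 2), mul_assoc]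
          have : 0 ≤ 1 + ρ := by linarith
          gcongr
      _ ≤ (1 + η) * (ρ ^ 2 * Efun k ρ) :=
          one_add_mul_sq_mul_Efun_le hρ.ne (by rw [abs_of_neg hρ]; exact hηρ.le) hρ'.le k
      _ ≤ η * (η * (1 - ρ + ρ ^ 2) + ρ ^ 2) * Efun k ρ := by
          rw [← mul_assoc]
          gcongr ?_ * Efun k ρ
          linarith [mul_nonneg (sq_nonneg η) (add_nonneg (neg_nonneg.mpr hρ.le) (sq_nonneg ρ))]
  rw [forwardWeight_Ediff hη.ne' hρ.ne]
  have hηρ' : 0 < η - ρ := by linarith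
  have hsum : 0 < η + ρ := by linarith
  refine mul_nonneg (by positivity) (add_nonneg (add_nonneg (by positivity) ?_) (sub_nonneg.mpr hE))
  exact mul_nonneg (by positivity) (by linarith)

lemma backwardWeight_Ediff_nonneg (k : ℕ) :
    0 ≤ backwardWeight η ρ (Ediff k η ρ) (Ediff (k + 1) η ρ) := by
  have hη : 0 < η := by linarith
  have hEη : 0 ≤ Efun k η := Efun_nonneg k hη.ne' (by linarith)
  have hEρ : 0 ≤ Efun k ρ := Efun_nonneg k hρ.ne hρ'.le
  have hsq : ρ ^ 2 ≤ η ^ 2 := sq_le_sq' (by linarith) (by linarith)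
  have hE : ρ ^ 2 * ((1 - η) * Efun k η) ≤ η ^ 2 * (η + 1 - ρ + ρ ^ 2) * Efun k ρ :=
    calc ρ ^ 2 * ((1 - η) * Efun k η)
        ≤ ρ ^ 2 * ((1 - ρ) * Efun k ρ) := by
          gcongr ρ ^ 2 * ?_
          exact one_sub_mul_Efun_le hρ.ne (by rw [abs_of_neg hρ]; exact hηρ.le) k
      _ ≤ η ^ 2 * ((η + 1 - ρ + ρ ^ 2) * Efun k ρ) := by
          have : 1 - ρ ≤ η + 1 - ρ + ρ ^ 2 := by linarith [sq_nonneg ρ]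
          have : 0 ≤ 1 - ρ := by linarith
          gcongr
      _ = η ^ 2 * (η + 1 - ρ + ρ ^ 2) * Efun k ρ := by rw [mul_assoc]
  rw [backwardWeight_Ediff hη.ne' hρ.ne]
  have hηρ' : 0 < η - ρ := by linarith
  have hsum : 0 < η + ρ := by linarith
  have hρ1 : 0 < 1 + ρ := by linarith
  have hnρ : 0 < -ρ := by linarith
  exact mul_nonneg (by positivity) (add_nonneg (by positivity) (sub_nonneg.mpr hE))

end Weights

section Interpolation

lemma add_fderiv_sub_le_of_convexOn {V : Type*} [NormedAddCommGroup V] [NormedSpace ℝ V]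
    {s : Set V} {f : V → ℝ} {f' : V →L[ℝ] ℝ} {y z : V} (hf : ConvexOn ℝ s f)
    (hy : y ∈ s) (hz : z ∈ s) (hf' : HasFDerivAt f f' y) :
    f y + f' (z - y) ≤ f z := by
  have hline : ConvexOn ℝ (AffineMap.lineMap y z ⁻¹' s) (f ∘ AffineMap.lineMap (k := ℝ) y z) :=
    hf.comp_affineMap (AffineMap.lineMap y z)
  have hderiv : HasDerivAt (f ∘ AffineMap.lineMap (k := ℝ) y z) (f' (z - y)) 0 :=
    HasFDerivAt.comp_hasDerivAt (0 : ℝ) (by simpa using hf') AffineMap.hasDerivAt_lineMap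
  have hslope := hline.le_slope_of_hasDerivAt (by simpa using hy) (by simpa using hz)
    one_pos hderiv
  simp only [slope_def_field, Function.comp_apply, AffineMap.lineMap_apply_one,
    AffineMap.lineMap_apply_zero, sub_zero, div_one] at hslope
  linarith

variable {E : Type*} [NormedAddCommGroup E] [InnerProductSpace ℝ E]

lemma quadratic_lower_bound {μ : ℝ} {f : E → ℝ} {g y : E}
    (hcurv : ConvexOn ℝ Set.univ (fun z => f z - μ / 2 * ‖z‖ ^ 2))
    (hg : HasFDerivAt f (innerSL ℝ g) y) (z : E) :
    f y + inner ℝ g (z - y) + μ / 2 * ‖z - y‖ ^ 2 ≤ f z := by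
  have hderiv := hg.sub ((hasStrictFDerivAt_norm_sq y).hasFDerivAt.const_mul (μ / 2))
  have hconv := add_fderiv_sub_le_of_convexOn hcurv (Set.mem_univ y) (Set.mem_univ z) hderiv
  have hexpand : ‖z - y‖ ^ 2 = ‖z‖ ^ 2 - ‖y‖ ^ 2 - 2 * inner ℝ y (z - y) := by
    rw [norm_sub_sq_real, inner_sub_right, real_inner_self_eq_norm_sq, real_inner_comm]
    ring
  rw [hexpand]
  simp only [sub_apply, smul_apply, innerSL_apply_apply, smul_eq_mul, nsmul_eq_mul] at hconv
  push_cast at hconv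
  linarith

lemma quadratic_upper_bound {L : ℝ} {f : E → ℝ} {g x : E}
    (hsmooth : ConvexOn ℝ Set.univ (fun z => L / 2 * ‖z‖ ^ 2 - f z))
    (hg : HasFDerivAt f (innerSL ℝ g) x) (z : E) :
    f z ≤ f x + inner ℝ g (z - x) + L / 2 * ‖z - x‖ ^ 2 := by
  have hconv : ConvexOn ℝ Set.univ (fun z => (-f) z - -L / 2 * ‖z‖ ^ 2) := by
    convert hsmooth using 2
    simp only [Pi.neg_apply]
    ring
  have hneg : HasFDerivAt (-f) (innerSL ℝ (-g)) x := by simpa using hg.neg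
  have hlower := quadratic_lower_bound hconv hneg z
  simp only [Pi.neg_apply, inner_neg_left] at hlower
  linarith

/-- The slack in the interpolation inequality of `F_{μ,L}` for the pair `(i, j)`, for a family of
points `x` with prescribed gradients `g` and values `F`. -/
noncomputable def interpolationSlack {ι : Type*} (L μ : ℝ) (x g : ι → E) (F : ι → ℝ) (i j : ι) :
    ℝ :=
  F i - F j - inner ℝ (g j) (x i - x j) - μ / 2 * ‖x i - x j‖ ^ 2 -
    ‖g i - g j - μ • (x i - x j)‖ ^ 2 / (2 * (L - μ))

variable {ι : Type*} {L μ : ℝ} {x g : ι → E}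

lemma interpolationSlack_nonneg (hμL : μ < L) {f : E → ℝ}
    (hsmooth : ConvexOn ℝ Set.univ (fun z => L / 2 * ‖z‖ ^ 2 - f z))
    (hcurv : ConvexOn ℝ Set.univ (fun z => f z - μ / 2 * ‖z‖ ^ 2)) {i j : ι}
    (hi : HasFDerivAt f (innerSL ℝ (g i)) (x i)) (hj : HasFDerivAt f (innerSL ℝ (g j)) (x j)) :
    0 ≤ interpolationSlack L μ x g (f ∘ x) i j := by
  have hM : L - μ ≠ 0 := (sub_pos.mpr hμL).ne'
  set v : E := x i - x j with hv
  set d : E := g i - g j - μ • v with hd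
  -- The gap between the upper model at `x i` and the lower model at `x j` is smallest here.
  set z : E := x i - (L - μ)⁻¹ • d with hz
  have hzi : z - x i = -((L - μ)⁻¹ • d) := by rw [hz]; abel
  have hzj : z - x j = v - (L - μ)⁻¹ • d := by rw [hz, hv]; abel
  have hgi : g i = d + g j + μ • v := by rw [hd]; abel
  have hmodels := (quadratic_lower_bound hcurv hj z).trans (quadratic_upper_bound hsmooth hi z)
  have hgap : interpolationSlack L μ x g (f ∘ x) i j =
      f (x i) + inner ℝ (g i) (z - x i) + L / 2 * ‖z - x i‖ ^ 2 -
        (f (x j) + inner ℝ (g j) (z - x j) + μ / 2 * ‖z - x j‖ ^ 2) := by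
    rw [interpolationSlack, ← hv, ← hd, hzi, hzj, hgi]
    simp only [← real_inner_self_eq_norm_sq, inner_sub_left, inner_sub_right, inner_add_left,
      inner_neg_left, inner_neg_right, real_inner_smul_left, real_inner_smul_right,
      real_inner_comm v d, Function.comp_apply]
    field_simp
    ring
  rw [hgap]
  exact sub_nonneg.mpr hmodels

lemma interpolationSlack_smul {γ : ℝ} (hγ : γ ≠ 0) (F : ι → ℝ) (i j : ι) :
    interpolationSlack (γ * L) (γ * μ) x (γ • g) (γ • F) i j =
      γ * interpolationSlack L μ x g F i j := by
  have hres : γ • g i - γ • g j - (γ * μ) • (x i - x j) = γ • (g i - g j - μ • (x i - x j)) := by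
    module
  simp only [interpolationSlack, Pi.smul_apply, smul_eq_mul, hres, norm_smul, mul_pow,
    Real.norm_eq_abs, sq_abs, real_inner_smul_left]
  rw [← mul_sub γ L, mul_left_comm 2, sq γ, mul_assoc γ γ, mul_div_mul_left _ _ hγ]
  ring

end Interpolation

section Certificate

variable {E : Type*} [NormedAddCommGroup E] [InnerProductSpace ℝ E]
  {η ρ : ℝ} (hηρ : η ≠ ρ) {ι : Type*} {x g : ι → E} (F : ι → ℝ) {i j l : ι}

include hηρ

lemma one_step_descent_identity (hij : x j = x i - g i) :
    (η - ρ) * (η * interpolationSlack (1 - ρ) (1 - η) x g F i j -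
      ρ * interpolationSlack (1 - ρ) (1 - η) x g F j i) =
      (η ^ 2 - ρ ^ 2) * (F i - F j) -
        ((η - ρ) * (1 + η) * (1 + ρ) - (η - ρ)) * (‖g i‖ ^ 2 / 2) -
        (η - ρ) * (‖g j‖ ^ 2 / 2) := by
  have hd : η - ρ ≠ 0 := sub_ne_zero.mpr hηρ
  have hi : x i - x j = g i := by rw [hij, sub_sub_cancel]
  have hj : x j - x i = -g i := by rw [hij, sub_sub_cancel_left]
  simp only [interpolationSlack, hi, hj, ← real_inner_self_eq_norm_sq, inner_sub_left,
    inner_sub_right, inner_neg_left, inner_neg_right, real_inner_smul_left, real_inner_smul_right,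
    smul_neg, real_inner_comm (g i) (g j), sub_sub_sub_cancel_left]
  field_simp
  ring

-- The multipliers at the pair `i, j` are the coefficients of `t` in `forwardWeight` and
-- `backwardWeight`, those at the pair `j, l` the coefficients of `s`.
lemma gradient_transfer_identity (hij : x j = x i - g i) (hjl : x l = x j - g j) :
    -η * (ρ * (ρ - η) + η + ρ) / 2 * interpolationSlack (1 - ρ) (1 - η) x g F i j +
    ρ * (η * (η - ρ) + η + ρ) / 2 * interpolationSlack (1 - ρ) (1 - η) x g F j i +
    (η - ρ - η * (η + ρ)) / 2 * interpolationSlack (1 - ρ) (1 - η) x g F j l +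
    (η - ρ + ρ * (η + ρ)) / 2 * interpolationSlack (1 - ρ) (1 - η) x g F l j +
    (η + ρ) / 2 * (η * interpolationSlack (1 - ρ) (1 - η) x g F i l -
      ρ * interpolationSlack (1 - ρ) (1 - η) x g F l i) =
      (η ^ 2 + ρ ^ 2) * (‖g j‖ ^ 2 / 2) - η ^ 2 * ρ ^ 2 * (‖g i‖ ^ 2 / 2) - ‖g l‖ ^ 2 / 2 := by
  have hd : η - ρ ≠ 0 := sub_ne_zero.mpr hηρ
  have h₁ : x i - x j = g i := by rw [hij, sub_sub_cancel]
  have h₂ : x j - x i = -g i := by rw [hij, sub_sub_cancel_left]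
  have h₃ : x j - x l = g j := by rw [hjl, sub_sub_cancel]
  have h₄ : x l - x j = -g j := by rw [hjl, sub_sub_cancel_left]
  have h₅ : x i - x l = g i + g j := by rw [← h₁, ← h₃, sub_add_sub_cancel]
  have h₆ : x l - x i = -(g i + g j) := by rw [← h₅, neg_sub]
  simp only [interpolationSlack, h₁, h₂, h₃, h₄, h₅, h₆, ← real_inner_self_eq_norm_sq,
    inner_sub_left, inner_sub_right, inner_add_left, inner_add_right, inner_neg_left,
    inner_neg_right, real_inner_smul_left, real_inner_smul_right, smul_add, smul_neg,
    real_inner_comm (g i) (g j), real_inner_comm (g i) (g l), real_inner_comm (g j) (g l),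
    sub_sub_sub_cancel_left]
  field_simp
  ring

lemma weighted_slack_sum_eq (hη : η ≠ 0) (hρ : ρ ≠ 0) {x g : ℕ → E} (F : ℕ → ℝ) (k : ℕ)
    (hx : ∀ i ≤ k, x (i + 1) = x i - g i) :
    ∑ i ∈ Finset.range k,
        (forwardWeight η ρ (Ediff i η ρ) (Ediff (i + 1) η ρ) *
            interpolationSlack (1 - ρ) (1 - η) x g F i (i + 1) +
          backwardWeight η ρ (Ediff i η ρ) (Ediff (i + 1) η ρ) *
            interpolationSlack (1 - ρ) (1 - η) x g F (i + 1) i +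
          Ediff (i + 1) η ρ * ((η + ρ) / 2 *
            (η * interpolationSlack (1 - ρ) (1 - η) x g F i (i + 2) -
              ρ * interpolationSlack (1 - ρ) (1 - η) x g F (i + 2) i))) +
      (forwardWeight η ρ (Ediff k η ρ) 0 *
          interpolationSlack (1 - ρ) (1 - η) x g F k (k + 1) +
        backwardWeight η ρ (Ediff k η ρ) 0 *
          interpolationSlack (1 - ρ) (1 - η) x g F (k + 1) k) =
      (η ^ 2 - ρ ^ 2) * (F 0 - F (k + 1)) +
        η ^ 2 * ρ ^ 2 * Ediff (k + 1) η ρ * (‖g k‖ ^ 2 / 2) -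
        (Ediff k η ρ + (η - ρ)) * (‖g (k + 1)‖ ^ 2 / 2) := by
  induction k with
  | zero =>
    have hstep := one_step_descent_identity hηρ F (hx 0 le_rfl)
    have hT := sq_mul_sq_mul_Ediff_succ hη hρ 0
    simp only [Finset.sum_range_zero, Ediff_zero, Efun_zero, forwardWeight, backwardWeight,
      zero_add] at hstep hT ⊢
    linear_combination hstep - hT * (‖g 0‖ ^ 2 / 2)
  | succ k ih =>
    have hstep := one_step_descent_identity hηρ F (hx (k + 1) le_rfl)
    have htransfer := gradient_transfer_identity hηρ F (hx k k.le_succ) (hx (k + 1) le_rfl)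
    have hT := sq_mul_sq_mul_Ediff_add_two hη hρ k
    have ih := ih fun i hi => hx i (hi.trans k.le_succ)
    rw [Finset.sum_range_succ]
    simp only [forwardWeight, backwardWeight, add_assoc, Nat.reduceAdd] at ih hstep htransfer hT ⊢
    linear_combination ih + hstep + Ediff (k + 1) η ρ * htransfer -
      hT * (‖g (k + 1)‖ ^ 2 / 2)

end Certificate

theorem unit_step_multistep_descent {E : Type*} [NormedAddCommGroup E] [InnerProductSpace ℝ E]
    {η ρ : ℝ} (hρ : ρ < 0) (hρ' : -1 < ρ) (hηρ : -ρ < η) {x g : ℕ → E} {F : ℕ → ℝ} {k : ℕ}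
    (hslack : ∀ i ≤ k + 1, ∀ j ≤ k + 1, 0 ≤ interpolationSlack (1 - ρ) (1 - η) x g F i j)
    (hx : ∀ i ≤ k, x (i + 1) = x i - g i) (hT : ∀ i ≤ k, 0 ≤ Ediff i η ρ) :
    (Ediff k η ρ + (η - ρ)) * (‖g (k + 1)‖ ^ 2 / 2) ≤
      (η ^ 2 - ρ ^ 2) * (F 0 - F (k + 1)) +
        η ^ 2 * ρ ^ 2 * Ediff (k + 1) η ρ * (‖g k‖ ^ 2 / 2) := by
  have hη : 0 < η := by linarith
  have hlast : Ediff k η ρ ≤ Efun k η := sub_le_self _ (Efun_nonneg k hρ.ne hρ'.le)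
  rw [← sub_nonneg, ← weighted_slack_sum_eq (by linarith) hη.ne' hρ.ne F k hx]
  refine add_nonneg (Finset.sum_nonneg fun i hi => ?_) (add_nonneg ?_ ?_)
  · have hik : i + 1 ≤ k := Finset.mem_range.mp hi
    have htwo : 0 ≤ η * interpolationSlack (1 - ρ) (1 - η) x g F i (i + 2) -
        ρ * interpolationSlack (1 - ρ) (1 - η) x g F (i + 2) i :=
      sub_nonneg.mpr <| (mul_nonpos_of_nonpos_of_nonneg hρ.le
        (hslack _ (by lia) _ (by lia))).trans (mul_nonneg hη.le (hslack _ (by lia) _ (by lia)))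
    refine add_nonneg (add_nonneg ?_ ?_) (mul_nonneg (hT _ hik) (mul_nonneg (by linarith) htwo))
    · exact mul_nonneg (forwardWeight_Ediff_nonneg hρ hηρ hρ' i)
        (hslack _ (by lia) _ (by lia))
    · exact mul_nonneg (backwardWeight_Ediff_nonneg hρ hηρ hρ' i)
        (hslack _ (by lia) _ (by lia))
  · exact mul_nonneg (forwardWeight_zero_right_nonneg hρ hηρ (hT k le_rfl) hlast)
      (hslack _ k.le_succ _ le_rfl)
  · exact mul_nonneg (backwardWeight_zero_right_nonneg hρ hηρ hρ' (hT k le_rfl))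
      (hslack _ le_rfl _ k.le_succ)

lemma stepsize_bounds {L μ γ κ : ℝ} (hκ : κ = μ / L) (hγ : 0 < γ) (hγL : 1 < γ * L)
    (hγL' : γ * L < 2 / (1 + max κ 0)) :
    κ * (γ * L) = γ * μ ∧ -1 < 1 - γ * L ∧ -(1 - γ * L) < 1 - γ * μ := by
  have hL : 0 < L := pos_of_mul_pos_right (one_pos.trans hγL) hγ.le
  have hκL : κ * (γ * L) = γ * μ := by
    rw [hκ]
    field_simp
  rw [lt_div_iff₀ (by positivity), mul_one_add] at hγL'
  have hzero : 0 ≤ γ * L * max κ 0 := by positivity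
  have hμ : γ * μ ≤ γ * L * max κ 0 := by
    rw [← hκL, mul_comm]
    gcongr
    exact le_max_left κ 0
  exact ⟨hκL, by linarith, by linarith⟩

theorem multistep_descent_GN4SD_general {E : Type*} [NormedAddCommGroup E] [InnerProductSpace ℝ E]
    {L μ κ : ℝ} (hκ : κ = μ / L) {f : E → ℝ}
    (hsmooth : ConvexOn ℝ Set.univ (fun z => L / 2 * ‖z‖ ^ 2 - f z))
    (hcurv : ConvexOn ℝ Set.univ (fun z => f z - μ / 2 * ‖z‖ ^ 2))
    {k : ℕ} {γ : ℝ} (hγ : 0 < γ) (hγL : 1 < γ * L) (hγL' : γ * L < 2 / (1 + max κ 0))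
    (hT : ∀ i : ℕ, 1 ≤ i → i ≤ k → 0 ≤ Tfun i (γ * L) κ)
    {x g : ℕ → E} (hg : ∀ i ≤ k + 1, HasFDerivAt f (innerSL ℝ (g i)) (x i))
    (hx : ∀ i ≤ k, x (i + 1) = x i - γ • g i)
    {ρ η : ℝ} (hρ : ρ = 1 - γ * L) (hη : η = 1 - γ * μ) :
    (f (x 0) - f (x (k + 1))) / γ ≥
      -η ^ 2 * ρ ^ 2 * Tfun (k + 1) (γ * L) κ / (η ^ 2 - ρ ^ 2) * (‖g k‖ ^ 2 / 2) +
        (Tfun k (γ * L) κ + (η - ρ)) / (η ^ 2 - ρ ^ 2) * (‖g (k + 1)‖ ^ 2 / 2) := by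
  obtain ⟨hκL, hρ_gt, hηρ⟩ := stepsize_bounds hκ hγ hγL hγL'
  rw [← hρ] at hρ_gt
  rw [← hρ, ← hη] at hηρ
  have hρ_neg : ρ < 0 := by linarith
  have hTE (i : ℕ) : Tfun i (γ * L) κ = Ediff i η ρ := by rw [Tfun_eq_Ediff, hκL, hη, hρ]
  have hT_nonneg (i : ℕ) (hi : i ≤ k) : 0 ≤ Ediff i η ρ := by
    rcases i.eq_zero_or_pos with rfl | hpos
    · exact (Ediff_zero η ρ).ge
    · exact hTE i ▸ hT i hpos hi
  have hμL : μ < L := lt_of_mul_lt_mul_left (by linarith : γ * μ < γ * L) hγ.le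
  have hslack (i : ℕ) (hi : i ≤ k + 1) (j : ℕ) (hj : j ≤ k + 1) :
      0 ≤ interpolationSlack (1 - ρ) (1 - η) x (γ • g) (γ • f ∘ x) i j := by
    rw [hρ, hη, sub_sub_cancel, sub_sub_cancel, interpolationSlack_smul hγ.ne']
    exact mul_nonneg hγ.le (interpolationSlack_nonneg hμL hsmooth hcurv (hg i hi) (hg j hj))
  have hdescent := unit_step_multistep_descent hρ_neg hρ_gt hηρ hslack hx hT_nonneg
  have hdenom : 0 < η ^ 2 - ρ ^ 2 := by nlinarith
  simp only [Pi.smul_apply, Function.comp_apply, smul_eq_mul, norm_smul, Real.norm_eq_abs,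
    mul_pow, sq_abs] at hdescent
  rw [hTE, hTE, ge_iff_le, ← sub_nonneg]
  refine (div_nonneg (sub_nonneg.mpr hdescent) (mul_pos (sq_pos_of_pos hγ) hdenom).le).trans_eq ?_
  field_simp
  ring

/-- **Multistep descent (Lemma 8 / `lemma:hypo_GN4SD`, inequality (GN4SD)).**
Let `f ∈ F_{μ,L}`, `κ = μ/L`, `k ≥ 1`, and `γ > 0` with `γL ∈ (1, 2/(1+[κ]₊))` and
`T_i(γL,κ) ≥ 0` for all `1 ≤ i ≤ k` (i.e. `γL ≥ γ̄_k`). With `ρ = 1−γL`, `η = 1−γμ`,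
after `k+1` gradient steps:
`(f(x₀) − f(x_{k+1}))/γ ≥ (−η²ρ²T_{k+1}/(η²−ρ²))·‖∇f(x_k)‖²/2 +
 ((T_k + (η−ρ))/(η²−ρ²))·‖∇f(x_{k+1})‖²/2`. -/
theorem multistep_descent_GN4SD
    {E : Type*} [NormedAddCommGroup E] [InnerProductSpace ℝ E] [CompleteSpace E]
    (L μ : ℝ) (hL : 0 < L) (hμL : μ < L) (κ : ℝ) (hκ : κ = μ / L)
    (f : E → ℝ) (hdiff : Differentiable ℝ f)
    (hsmooth : ConvexOn ℝ Set.univ (fun z => L / 2 * ‖z‖ ^ 2 - f z))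
    (hcurv : ConvexOn ℝ Set.univ (fun z => f z - μ / 2 * ‖z‖ ^ 2))
    (k : ℕ) (hk : 1 ≤ k)
    (γ : ℝ) (hγ : 0 < γ) (hγL : 1 < γ * L) (hγL' : γ * L < 2 / (1 + max κ 0))
    (hT : ∀ i : ℕ, 1 ≤ i → i ≤ k → 0 ≤ Tfun i (γ * L) κ)
    (x : ℕ → E) (hx : ∀ i ≤ k, x (i + 1) = x i - γ • gradient f (x i))
    (ρ η : ℝ) (hρ : ρ = 1 - γ * L) (hη : η = 1 - γ * μ) :
    (f (x 0) - f (x (k + 1))) / γ ≥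
      -η ^ 2 * ρ ^ 2 * Tfun (k + 1) (γ * L) κ / (η ^ 2 - ρ ^ 2) *
          (‖gradient f (x k)‖ ^ 2 / 2) +
        (Tfun k (γ * L) κ + (η - ρ)) / (η ^ 2 - ρ ^ 2) *
          (‖gradient f (x (k + 1))‖ ^ 2 / 2) := by
  exact multistep_descent_GN4SD_general hκ hsmooth hcurv hγ hγL hγL' hT
    (fun i _ => (hdiff (x i)).hasGradientAt.hasFDerivAt) hx hρ hη
end
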